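/- arXiv:1301.0401 — 10 statements merged into one kernel-verified Lean document; each statement's English description precedes it below -/
import Mathlib

section
/- For every capacity C > 0 and every ex-post individually rational, Bayesian incentive compatible single-agent mechanism with randomized payments, there is a BIC two-priced mechanism with the same allocation probabilities and pointwise weakly higher expected payment. Precisely: let q : [0,∞) → [0,1] and, for each v ≥ 0, let μ_v be a probability measure on (−∞, v] with ∫|t| dμ_v(t) < ∞ (the distribution of the price charged on report v conditional on being served; losers pay 0), and suppose that for all v, v' ≥ 0, q(v)·∫ min(v − t, C) dμ_v(t) ≥ q(v')·∫ min(v − t, C) dμ_{v'}(t). Then there exist q_v, q_c : [0,∞) → [0,1] with q_v + q_c = q such that (q_v, q_c) is a BIC two-priced mechanism with capacity C and, for every v ≥ 0, v·q_v(v) + (v − C)·q_c(v) ≥ q(v)·∫ t dμ_v(t). -/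
open MeasureTheory Set

/-- The utility from a price `t ≤ v'` dominates the utility from the two-point lottery on the
prices `v'` and `v' - C` giving type `v'` the same capacitated utility. -/
lemma two_point_lottery_le_min {C : ℝ} (hC : 0 < C) {v v' t : ℝ} (ht : t ≤ v') :
    (1 - min (v' - t) C / C) * min (v - v') C + min (v' - t) C / C * min (v - v' + C) C ≤
      min (v - t) C := by
  set m := min (v' - t) C
  have hmC : m / C * C = m := div_mul_cancel₀ m hC.ne'
  have hm_nonneg : 0 ≤ m := le_min (by linarith) hC.le
  have hm_left : m ≤ v' - t := min_le_left _ _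
  have hm_right : m ≤ C := min_le_right _ _
  have hr_nonneg : 0 ≤ m / C := div_nonneg hm_nonneg hC.le
  have hr_one : m / C ≤ 1 := (div_le_one hC).2 hm_right
  rcases le_total v v' with h | h
  · rw [min_eq_left (by linarith : v - v' ≤ C), min_eq_left (by linarith : v - v' + C ≤ C)]
    apply le_min <;> nlinarith
  · rw [min_eq_right (by linarith : C ≤ v - v' + C)]
    have hd_left := min_le_left (v - v') C
    have hd_right := min_le_right (v - v') C
    have hd_nonneg : 0 ≤ min (v - v') C := le_min (by linarith) hC.le
    apply le_min <;> nlinarith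

lemma integrable_min_const_sub {ν : Measure ℝ} [IsFiniteMeasure ν]
    (hν : Integrable (fun t => t) ν) (v C : ℝ) : Integrable (fun t => min (v - t) C) ν :=
  ((integrable_const v).sub hν).inf (integrable_const C)

/-- Integrated form of `two_point_lottery_le_min`. -/
lemma two_point_lottery_le_integral_min {C : ℝ} (hC : 0 < C) {v v' : ℝ} {ν : Measure ℝ}
    [IsProbabilityMeasure ν] (hν : Integrable (fun t => t) ν) (hsupp : ∀ᵐ t ∂ν, t ≤ v') :
    (1 - (∫ t, min (v' - t) C ∂ν) / C) * min (v - v') C +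
        (∫ t, min (v' - t) C ∂ν) / C * min (v - v' + C) C ≤
      ∫ t, min (v - t) C ∂ν := by
  have hdiv := (integrable_min_const_sub hν v' C).div_const C
  have hleft := ((integrable_const (1 : ℝ)).sub hdiv).mul_const (min (v - v') C)
  have hright := hdiv.mul_const (min (v - v' + C) C)
  have hmono := integral_mono_ae (hleft.add hright) (integrable_min_const_sub hν v C)
    (hsupp.mono fun t ht => two_point_lottery_le_min hC ht)
  rw [integral_add' hleft hright, integral_mul_const, integral_mul_const,
    integral_sub' (integrable_const 1) hdiv, integral_div] at hmono
  simpa using hmono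

/-- For every capacity `C > 0` and every ex-post IR, BIC single-agent
mechanism with randomized payments (allocation probability `q v`, price distribution
`μ v` supported on `(-∞, v]` with finite first moment), there is a BIC two-priced
mechanism with the same allocation probabilities and pointwise weakly higher expected
payment. -/
theorem two_priced_dominates_randomized
    (C : ℝ) (hC : 0 < C)
    (q : ℝ → ℝ) (hq : ∀ v, 0 ≤ v → q v ∈ Icc (0 : ℝ) 1)
    (μ : ℝ → Measure ℝ)
    (hprob : ∀ v, 0 ≤ v → IsProbabilityMeasure (μ v))
    (hsupp : ∀ v, 0 ≤ v → μ v (Ioi v) = 0)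
    (hint : ∀ v, 0 ≤ v → Integrable (fun t => t) (μ v))
    (hBIC : ∀ v, 0 ≤ v → ∀ v', 0 ≤ v' →
      q v * ∫ t, min (v - t) C ∂(μ v) ≥ q v' * ∫ t, min (v - t) C ∂(μ v')) :
    ∃ qv qc : ℝ → ℝ,
      (∀ v, 0 ≤ v → 0 ≤ qv v ∧ 0 ≤ qc v ∧ qv v + qc v = q v) ∧
      (∀ v, 0 ≤ v → ∀ v', 0 ≤ v' →
        qv v * min (v - v) C + qc v * min (v - v + C) C ≥
          qv v' * min (v - v') C + qc v' * min (v - v' + C) C) ∧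
      (∀ v, 0 ≤ v → v * qv v + (v - C) * qc v ≥ q v * ∫ t, t ∂(μ v)) := by
  set I : ℝ → ℝ := fun v => ∫ t, min (v - t) C ∂(μ v)
  have hsupp_ae (v : ℝ) (hv : 0 ≤ v) : ∀ᵐ t ∂(μ v), t ≤ v :=
    (measure_eq_zero_iff_ae_notMem.1 (hsupp v hv)).mono fun t ht => not_lt.1 ht
  refine ⟨fun v => q v * (1 - I v / C), fun v => q v * (I v / C), fun v hv => ?_,
    fun v hv v' hv' => ?_, fun v hv => ?_⟩
  · have := hprob v hv
    have hI_nonneg : 0 ≤ I v := integral_nonneg_of_ae <|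
      (hsupp_ae v hv).mono fun t ht => le_min (sub_nonneg.2 ht) hC.le
    have hI_le : I v ≤ C := by
      simpa using integral_mono (integrable_min_const_sub (hint v hv) v C) (integrable_const C)
        fun t => min_le_right (v - t) C
    refine ⟨mul_nonneg (hq v hv).1 (sub_nonneg.2 ((div_le_one hC).2 hI_le)),
      mul_nonneg (hq v hv).1 (div_nonneg hI_nonneg hC.le), by ring⟩
  · have := hprob v' hv'
    have hdev := mul_le_mul_of_nonneg_left (two_point_lottery_le_integral_min (v := v) hC
      (hint v' hv') (hsupp_ae v' hv')) (hq v' hv').1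
    have htruth : q v * (1 - I v / C) * min (v - v) C + q v * (I v / C) * min (v - v + C) C =
        q v * I v := by
      rw [sub_self, min_eq_left hC.le, zero_add, min_self]
      field_simp
      ring
    calc _ = q v * I v := htruth
      _ ≥ q v' * ∫ t, min (v - t) C ∂(μ v') := hBIC v hv v' hv'
      _ ≥ _ := hdev
      _ = _ := by ring
  · have := hprob v hv
    have hI_le : I v ≤ v - ∫ t, t ∂(μ v) := by
      have hmono := integral_mono (integrable_min_const_sub (hint v hv) v C)
        ((integrable_const v).sub (hint v hv)) fun t => min_le_left (v - t) C
      rw [integral_sub' (integrable_const v) (hint v hv)] at hmono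
      simpa using hmono
    have hpay : v * (q v * (1 - I v / C)) + (v - C) * (q v * (I v / C)) = q v * (v - I v) := by
      field_simp
      ring
    rw [hpay]
    exact mul_le_mul_of_nonneg_left (by linarith) (hq v hv).1
end

section
/- Let C > 0 and let q_v, q_c : [0,∞) → [0,1] with q_v(v) + q_c(v) ≤ 1 for all v define a two-priced mechanism. The mechanism is BIC if and only if for all v, v' with 0 ≤ v < v' ≤ v + C: q_v(v)·(v' − v) ≤ C·(q_c(v') − q_c(v)) ≤ (q_v(v') + q_c(v'))·(v' − v). -/
open Set

/-- A function on `[0, ∞)` that is monotone at distances up to `C > 0` is monotone. -/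
theorem le_of_forall_le_of_le_add {C : ℝ} (hC : 0 < C) {f : ℝ → ℝ}
    (hf : ∀ u w, 0 ≤ u → u ≤ w → w ≤ u + C → f u ≤ f w)
    {u w : ℝ} (hu : 0 ≤ u) (huw : u ≤ w) : f u ≤ f w := by
  have chain : ∀ n : ℕ, ∀ u, 0 ≤ u → u ≤ w → w ≤ u + n * C → f u ≤ f w := by
    intro n
    induction n with
    | zero =>
      intro u hu huw hw
      exact hf u w hu huw (by push_cast at hw; linarith)
    | succ n ih =>
      intro u hu huw hw
      rcases le_total w (u + C) with h | h
      · exact hf u w hu huw h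
      · exact (hf u (u + C) hu (by linarith) le_rfl).trans
          (ih (u + C) (by linarith) h (by push_cast at hw; linarith))
  obtain ⟨n, hn⟩ := exists_nat_ge ((w - u) / C)
  rw [div_le_iff₀ hC] at hn
  exact chain n u hu huw (by linarith)

/-- A two-priced mechanism `(q_v, q_c)` with capacity `C > 0` is BIC
iff for all `0 ≤ v < v' ≤ v + C`:
`q_v(v)·(v' − v) ≤ C·(q_c(v') − q_c(v)) ≤ (q_v(v') + q_c(v'))·(v' − v)`. -/
theorem two_priced_BIC_characterization
    (C : ℝ) (hC : 0 < C)
    (qv qc : ℝ → ℝ)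
    (hqv : ∀ v, 0 ≤ v → qv v ∈ Icc (0 : ℝ) 1)
    (hqc : ∀ v, 0 ≤ v → qc v ∈ Icc (0 : ℝ) 1)
    (hsum : ∀ v, 0 ≤ v → qv v + qc v ≤ 1) :
    (∀ v, 0 ≤ v → ∀ v', 0 ≤ v' →
        qv v * min (v - v) C + qc v * min (v - v + C) C ≥
          qv v' * min (v - v') C + qc v' * min (v - v' + C) C)
    ↔ (∀ v v' : ℝ, 0 ≤ v → v < v' → v' ≤ v + C →
        qv v * (v' - v) ≤ C * (qc v' - qc v) ∧
          C * (qc v' - qc v) ≤ (qv v' + qc v') * (v' - v)) := by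
  simp only [sub_self, zero_add, min_self, min_eq_left hC.le, mul_zero]
  constructor
  · intro h u w hu huw hwu
    have hw : 0 ≤ w := hu.trans huw.le
    have high := h w hw u hu
    have low := h u hu w hw
    rw [min_eq_left (by linarith), min_eq_right (by linarith)] at high
    rw [min_eq_left (by linarith), min_eq_left (by linarith)] at low
    constructor <;> linarith
  · intro h
    have mono : ∀ u w, 0 ≤ u → u ≤ w → qc u ≤ qc w := by
      refine fun u w hu huw => le_of_forall_le_of_le_add hC (fun a b ha hab hba => ?_) hu huw
      rcases hab.eq_or_lt with rfl | hab
      · exact le_rfl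
      · have := (mul_nonneg (hqv a ha).1 (sub_nonneg.2 hab.le)).trans (h a b ha hab hba).1
        exact sub_nonneg.1 (nonneg_of_mul_nonneg_right this hC)
    intro v hv v' hv'
    rcases lt_trichotomy v v' with hlt | rfl | hlt
    · rw [min_eq_left (by linarith), min_eq_left (by linarith)]
      rcases le_or_gt v' (v + C) with hle | hgt
      · linarith [(h v v' hv hlt hle).2]
      · have served := mul_nonneg (hqv v' hv').1 (sub_nonneg.2 hlt.le)
        have discounted := mul_nonneg (hqc v' hv').1 (sub_nonneg.2 hgt.le)
        have utility := mul_nonneg hC.le (hqc v hv).1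
        linarith
    · simp [hC.le]
    · rw [min_eq_right (by linarith : C ≤ v - v' + C)]
      rcases le_or_gt v (v' + C) with hle | hgt
      · rw [min_eq_left (by linarith)]
        linarith [(h v' v hv' hlt hle).1]
      · rw [min_eq_right (by linarith)]
        have step := (h v' (v' + C) hv' (by linarith) le_rfl).1
        have tail := mul_le_mul_of_nonneg_left (mono (v' + C) v (by linarith) hgt.le) hC.le
        linarith
end

section
/- Let C > 0 and let (q_v, q_c) be a BIC two-priced mechanism with q_v and q_c Lebesgue measurable. Then for all 0 ≤ v < v': ∫_v^{v'} q_v(z) dz ≤ C·(q_c(v') − q_c(v)) ≤ ∫_v^{v'} (q_v(z) + q_c(z)) dz. -/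
open Set Filter Topology MeasureTheory

/-- A function bounding the right slopes of `f` from below has integral at most the increment
of `f`, for `f` absolutely continuous. -/
lemma AbsolutelyContinuousOnInterval.integral_le_sub_of_le_slope {f g : ℝ → ℝ} {a b : ℝ}
    (hab : a ≤ b) (hf : AbsolutelyContinuousOnInterval f a b)
    (hg : IntervalIntegrable g volume a b)
    (hslope : ∀ x ∈ Ioo a b, ∀ᶠ y in 𝓝[>] x, g x ≤ slope f x y) :
    ∫ x in a..b, g x ≤ f b - f a := by
  rw [← hf.integral_deriv_eq_sub]
  refine intervalIntegral.integral_mono_ae_restrict hab hg hf.intervalIntegrable_deriv ?_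
  rw [EventuallyLE, restrict_Ioo_eq_restrict_Icc.symm, ae_restrict_iff' measurableSet_Ioo]
  filter_upwards [hf.ae_differentiableAt] with x hx hxab
  have hd := (hx (uIcc_of_le hab ▸ Ioo_subset_Icc_self hxab)).hasDerivAt
  exact ge_of_tendsto (hasDerivAt_iff_tendsto_slope_left_right.1 hd).2 (hslope x hxab)

/-- A function bounding the left slopes of `f` from above has integral at least the increment
of `f`, for `f` absolutely continuous. -/
lemma AbsolutelyContinuousOnInterval.sub_le_integral_of_slope_le {f g : ℝ → ℝ} {a b : ℝ}
    (hab : a ≤ b) (hf : AbsolutelyContinuousOnInterval f a b)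
    (hg : IntervalIntegrable g volume a b)
    (hslope : ∀ x ∈ Ioo a b, ∀ᶠ y in 𝓝[<] x, slope f x y ≤ g x) :
    f b - f a ≤ ∫ x in a..b, g x := by
  rw [← hf.integral_deriv_eq_sub]
  refine intervalIntegral.integral_mono_ae_restrict hab hf.intervalIntegrable_deriv hg ?_
  rw [EventuallyLE, restrict_Ioo_eq_restrict_Icc.symm, ae_restrict_iff' measurableSet_Ioo]
  filter_upwards [hf.ae_differentiableAt] with x hx hxab
  have hd := (hx (uIcc_of_le hab ▸ Ioo_subset_Icc_self hxab)).hasDerivAt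
  exact le_of_tendsto (hasDerivAt_iff_tendsto_slope_left_right.1 hd).1 (hslope x hxab)

/-- A measurable function with values in `[0, 1]` on `[0, ∞)` is integrable on bounded
intervals of `[0, ∞)`. -/
lemma intervalIntegrable_of_mem_Icc_zero_one {q : ℝ → ℝ} (hm : Measurable q)
    (hq : ∀ x, 0 ≤ x → q x ∈ Icc (0 : ℝ) 1) {a b : ℝ} (ha : 0 ≤ a) (hb : 0 ≤ b) :
    IntervalIntegrable q volume a b := by
  refine (intervalIntegrable_const (c := (1 : ℝ))).mono_fun hm.aestronglyMeasurable ?_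
  filter_upwards [ae_restrict_mem measurableSet_uIoc] with x hx
  have h := hq x ((le_min ha hb).trans hx.1.le)
  rw [norm_one, Real.norm_of_nonneg h.1]
  exact h.2

/-- For a measurable BIC two-priced mechanism `(q_v, q_c)` with capacity
`C > 0`, for all `0 ≤ v < v'`:
`∫_v^{v'} q_v ≤ C·(q_c(v') − q_c(v)) ≤ ∫_v^{v'} (q_v + q_c)`. -/
theorem two_priced_BIC_integral_form
    (C : ℝ) (hC : 0 < C)
    (qv qc : ℝ → ℝ) (hmv : Measurable qv) (hmc : Measurable qc)
    (hqv : ∀ v, 0 ≤ v → qv v ∈ Icc (0 : ℝ) 1)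
    (hqc : ∀ v, 0 ≤ v → qc v ∈ Icc (0 : ℝ) 1)
    (hsum : ∀ v, 0 ≤ v → qv v + qc v ≤ 1)
    (hBIC : ∀ v, 0 ≤ v → ∀ v', 0 ≤ v' →
        qv v * min (v - v) C + qc v * min (v - v + C) C ≥
          qv v' * min (v - v') C + qc v' * min (v - v' + C) C) :
    ∀ v v' : ℝ, 0 ≤ v → v < v' →
      (∫ z in v..v', qv z) ≤ C * (qc v' - qc v) ∧
        C * (qc v' - qc v) ≤ ∫ z in v..v', (qv z + qc z) := by
  have lower : ∀ a b, 0 ≤ a → a ≤ b → qv a * min (b - a) C ≤ C * qc b - C * qc a := by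
    intro a b ha hab
    have h := hBIC b (ha.trans hab) a ha
    rw [sub_self, zero_add, min_self, min_eq_left hC.le,
      min_eq_right (by linarith : C ≤ b - a + C)] at h
    linarith
  have upper : ∀ a b, 0 ≤ a → a ≤ b →
      C * qc b - C * qc a ≤ (qv b + qc b) * (b - a) := by
    intro a b ha hab
    have h := hBIC a ha b (ha.trans hab)
    rw [sub_self, zero_add, min_self, min_eq_left hC.le,
      min_eq_left (by linarith : a - b ≤ C),
      min_eq_left (by linarith : a - b + C ≤ C)] at h
    linarith
  intro v v' hv hvv'
  have hv' : 0 ≤ v' := hv.trans hvv'.le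
  have hlip : LipschitzOnWith 1 (fun x ↦ C * qc x) (uIcc v v') := by
    refine LipschitzOnWith.of_le_add fun x hx y hy ↦ ?_
    rw [uIcc_of_le hvv'.le] at hx hy
    have hx0 := hv.trans hx.1
    have hy0 := hv.trans hy.1
    rw [Real.dist_eq]
    rcases le_total x y with hxy | hxy
    · have h := lower x y hx0 hxy
      have := mul_nonneg (hqv x hx0).1 (le_min (sub_nonneg.2 hxy) hC.le)
      linarith [abs_nonneg (x - y)]
    · have h := upper y x hy0 hxy
      have := mul_le_mul_of_nonneg_right (hsum x hx0) (sub_nonneg.2 hxy)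
      linarith [le_abs_self (x - y)]
  have hac := hlip.absolutelyContinuousOnInterval
  have hiv := intervalIntegrable_of_mem_Icc_zero_one hmv hqv hv hv'
  have hic := intervalIntegrable_of_mem_Icc_zero_one hmc hqc hv hv'
  rw [mul_sub]
  constructor
  · refine hac.integral_le_sub_of_le_slope hvv'.le hiv fun x hx ↦ ?_
    filter_upwards [Ioo_mem_nhdsGT (lt_add_of_pos_right x hC)] with y hy
    have h := lower x y (hv.trans hx.1.le) hy.1.le
    rw [min_eq_left (by linarith [hy.2])] at h
    rwa [slope_def_field, le_div_iff₀ (sub_pos.2 hy.1)]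
  · refine hac.sub_le_integral_of_slope_le hvv'.le (hiv.add hic) fun x hx ↦ ?_
    filter_upwards [Ioo_mem_nhdsLT hx.1] with y hy
    have h := upper y x (hv.trans hy.1.le) hy.2.le
    rwa [slope_comm, slope_def_field, div_le_iff₀ (sub_pos.2 hy.2)]
end

section
/- Let C > 0, let (q_v, q_c) be a measurable BIC two-priced mechanism with capacity C, and let the agent's value V be drawn from a distribution on [0,∞) with CDF F, density f > 0, and finite mean. Then E[p(V)] ≤ E[φ⁺(V)·q(V)] + E[φ⁺(V)·q_c(V)] + E[max(V − C, 0)·q_c(V)], where q = q_v + q_c, p(v) = v·q(v) − C·q_c(v), φ(v) = v − (1 − F(v))/f(v), and φ⁺(v) = max(φ(v), 0). -/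
open MeasureTheory Set

/-- A function that is nonnegative on a convex set has a greatest convex minorant there. -/
lemma exists_greatest_convex_minorant {s : Set ℝ} (hs : Convex ℝ s) {u : ℝ → ℝ}
    (hu : ∀ x ∈ s, 0 ≤ u x) :
    ∃ k : ℝ → ℝ, ConvexOn ℝ s k ∧ (∀ x ∈ s, k x ≤ u x) ∧
      ∀ m : ℝ → ℝ, ConvexOn ℝ s m → (∀ x ∈ s, m x ≤ u x) → ∀ x ∈ s, m x ≤ k x := by
  let G : Set (ℝ → ℝ) := {m | ConvexOn ℝ s m ∧ ∀ x ∈ s, m x ≤ u x}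
  have hG : G.Nonempty := ⟨fun _ => 0, convexOn_const 0 hs, hu⟩
  have hle : ∀ m ∈ G, ∀ x ∈ s, m x ≤ sSup ((fun m : ℝ → ℝ => m x) '' G) := by
    intro m hm x hx
    refine le_csSup ⟨u x, ?_⟩ ⟨m, hm, rfl⟩
    rintro _ ⟨n, hn, rfl⟩
    exact hn.2 x hx
  refine ⟨fun x => sSup ((fun m : ℝ → ℝ => m x) '' G), ⟨hs, ?_⟩, ?_, fun m h₁ h₂ => hle m ⟨h₁, h₂⟩⟩
  · intro x hx y hy a b ha hb hab
    refine csSup_le (hG.image _) ?_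
    rintro _ ⟨m, hm, rfl⟩
    refine (hm.1.2 hx hy ha hb hab).trans ?_
    have h₁ := hle m hm x hx
    have h₂ := hle m hm y hy
    simp only [smul_eq_mul]
    gcongr
  · intro x hx
    refine csSup_le (hG.image _) ?_
    rintro _ ⟨m, hm, rfl⟩
    exact hm.2 x hx

/-- If `qv` is a forward subgradient of `C * qc` on `[0, C]`, then the greatest convex minorant `k`
of `qc` has forward subgradient `(qv + qc - k) / C`. -/
lemma exists_convex_minorant_of_forward_subgradient {C : ℝ} (hC : 0 < C) {qv qc : ℝ → ℝ}
    (hqc : ∀ x ∈ Icc 0 C, 0 ≤ qc x)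
    (hsub : ∀ x ∈ Icc 0 C, ∀ y ∈ Icc 0 C, x ≤ y → (y - x) * qv x ≤ C * (qc y - qc x)) :
    ∃ k : ℝ → ℝ, ConvexOn ℝ (Icc 0 C) k ∧ (∀ x ∈ Icc 0 C, 0 ≤ k x) ∧
      (∀ x ∈ Icc 0 C, k x ≤ qc x) ∧
      ∀ x ∈ Icc 0 C, ∀ y ∈ Icc 0 C, x ≤ y →
        (y - x) * (qv x + qc x - k x) ≤ C * (k y - k x) := by
  obtain ⟨k, hk, hku, hmax⟩ := exists_greatest_convex_minorant (convex_Icc 0 C) hqc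
  refine ⟨k, hk, hmax (fun _ => 0) (convexOn_const 0 (convex_Icc 0 C)) hqc, hku, ?_⟩
  intro x hx y hy hxy
  rcases hxy.eq_or_lt with rfl | hlt
  · simp
  set p := (qv x + qc x - k x) / C with hp
  have hpC : qv x + qc x - k x = C * p := by rw [hp]; field_simp
  suffices h : k x + p * (y - x) ≤ k y by
    rw [hpC]; nlinarith
  by_cases hslope : ∃ a ∈ Icc 0 C, a < x ∧ k a ≤ k x + p * (a - x)
  · obtain ⟨a, ha, hax, hka⟩ := hslope
    have h₁ := hk.slope_mono_adjacent ha hy hax hlt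
    have h₂ : p ≤ (k x - k a) / (x - a) := by
      rw [le_div_iff₀ (by linarith)]; linarith
    have h₃ := (le_div_iff₀ (by linarith)).1 (h₂.trans h₁)
    linarith
  · push Not at hslope
    have haff : ConvexOn ℝ (Icc 0 C) (fun t => k x + p * (t - x)) := by
      refine ⟨convex_Icc 0 C, fun s _ t _ a b _ _ hab => le_of_eq ?_⟩
      simp only [smul_eq_mul]
      linear_combination (-k x + p * x) * hab
    refine le_sup_right.trans (hmax _ (hk.sup haff) (fun t ht => sup_le (hku t ht) ?_) y hy)
    rcases lt_or_ge t x with h | h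
    · exact (hslope t ht h).le.trans (hku t ht)
    · have h₁ := hsub x hx t ht h
      have h₂ : 0 ≤ (C - (t - x)) * (qc x - k x) :=
        mul_nonneg (by linarith [ht.2, hx.1]) (by linarith [hku x hx])
      refine le_of_mul_le_mul_left ?_ hC
      linear_combination h₁ + h₂ - (t - x) * hpC

/-- A monotone function grows at least as much as the integral of a forward subgradient. -/
lemma intervalIntegral_le_sub_of_forward_subgradient {k D : ℝ → ℝ} {a b δ : ℝ} (hab : a ≤ b)
    (hδ : 0 < δ) (hk : MonotoneOn k (Icc a b)) (hD : IntervalIntegrable D volume a b)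
    (hsub : ∀ x ∈ Icc a b, ∀ y ∈ Icc a b, x ≤ y → y ≤ x + δ → (y - x) * D x ≤ k y - k x) :
    ∫ x in a..b, D x ≤ k b - k a := by
  have hk' : MonotoneOn k (uIcc a b) := by rwa [uIcc_of_le hab]
  have hmem := hk'.intervalIntegral_deriv_mem_uIcc
  have hkab : k a ≤ k b := hk ⟨le_rfl, hab⟩ ⟨hab, le_rfl⟩ hab
  rw [uIcc_of_le (by linarith)] at hmem
  refine le_trans ?_ hmem.2
  refine intervalIntegral.integral_mono_ae_restrict hab hD hk'.intervalIntegrable_deriv ?_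
  rw [← restrict_Ioo_eq_restrict_Icc]
  filter_upwards [ae_restrict_mem measurableSet_Ioo,
    ae_restrict_of_ae hk.ae_differentiableWithinAt_of_mem] with x hx hdiff
  have hxI : x ∈ Icc a b := Ioo_subset_Icc_self hx
  have hd := ((hdiff hxI).differentiableAt (Icc_mem_nhds hx.1 hx.2)).hasDerivAt
  have hlim := (hasDerivWithinAt_iff_tendsto_slope' self_notMem_Ioi).mp
    (hd.hasDerivWithinAt (s := Ioi x))
  refine ge_of_tendsto hlim ?_
  have hmin : x < min b (x + δ) := lt_min hx.2 (by linarith)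
  filter_upwards [Ioo_mem_nhdsGT hmin] with y hy
  have hyb := hy.2.le.trans (min_le_left _ _)
  rw [slope_def_field, le_div_iff₀ (by linarith [hy.1]), mul_comm]
  exact hsub x hxI y ⟨by linarith [hy.1, hx.1], hyb⟩ hy.1.le (hy.2.le.trans (min_le_right _ _))

/-- The integral of a convex function is at most its trapezoidal approximation. -/
lemma ConvexOn.two_mul_intervalIntegral_le {k : ℝ → ℝ} {v : ℝ} (hv : 0 ≤ v)
    (hk : ConvexOn ℝ (Icc 0 v) k) (hi : IntervalIntegrable k volume 0 v) :
    2 * ∫ x in (0 : ℝ)..v, k x ≤ v * (k 0 + k v) := by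
  rcases hv.eq_or_lt with rfl | hv0
  · simp
  have h : ∫ x in (0 : ℝ)..v, k x ≤ ∫ x in (0 : ℝ)..v, (k 0 + (k v - k 0) / v * x) := by
    refine intervalIntegral.integral_mono_on hv hi (Continuous.intervalIntegrable (by fun_prop) _ _) ?_
    intro x hx
    have hxv : 0 ≤ 1 - x / v := by rw [sub_nonneg, div_le_one hv0]; exact hx.2
    have := hk.2 ⟨le_rfl, hv⟩ ⟨hv, le_rfl⟩ hxv (div_nonneg hx.1 hv) (by ring)
    simp only [smul_eq_mul, mul_zero, zero_add, div_mul_cancel₀ x hv0.ne'] at this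
    linear_combination this
  have h2 : ∫ x in (0 : ℝ)..v, (k 0 + (k v - k 0) / v * x) = v * (k 0 + k v) / 2 := by
    rw [intervalIntegral.integral_add (by simp) (by
      apply Continuous.intervalIntegrable; fun_prop), intervalIntegral.integral_const_mul]
    simp
    field_simp
    ring
  linarith

lemma intervalIntegrable_of_measurable_of_bounded {g : ℝ → ℝ} (hg : Measurable g) {B : ℝ}
    (hB : ∀ v, 0 ≤ v → |g v| ≤ B) {a b : ℝ} (ha : 0 ≤ a) (hab : a ≤ b) :
    IntervalIntegrable g volume a b := by
  rw [intervalIntegrable_iff_integrableOn_Ioc_of_le hab]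
  refine Measure.integrableOn_of_bounded (M := B) (by simp) hg.aestronglyMeasurable ?_
  filter_upwards [ae_restrict_mem measurableSet_Ioc] with x hx
  exact hB x (ha.trans hx.1.le)

/-- In a mechanism with the forward incentive constraints, the payment net of `(v - C)⁺ * qc` is
dominated by the risk-neutral payment of an allocation `qv + qc + k` with `0 ≤ k ≤ qc`. -/
lemma exists_allocation_payment_le {C : ℝ} (hC : 0 < C) {qv qc : ℝ → ℝ}
    (hmv : Measurable qv) (hmc : Measurable qc)
    (hqv : ∀ v, 0 ≤ v → qv v ∈ Icc (0 : ℝ) 1) (hqc : ∀ v, 0 ≤ v → qc v ∈ Icc (0 : ℝ) 1)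
    (hmono : MonotoneOn qc (Ici 0))
    (hsub : ∀ x, 0 ≤ x → ∀ y, x ≤ y → y ≤ x + C → (y - x) * qv x ≤ C * (qc y - qc x)) :
    ∃ k : ℝ → ℝ, Measurable k ∧ (∀ v, 0 ≤ v → 0 ≤ k v) ∧ (∀ v, 0 ≤ v → k v ≤ qc v) ∧
      ∀ v, 0 ≤ v → v * (qv v + qc v) - C * qc v - max (v - C) 0 * qc v ≤
        v * (qv v + qc v + k v) - ∫ x in (0 : ℝ)..v, (qv x + qc x + k x) := by
  obtain ⟨κ, hconv, hκ0, hκle, hκsub⟩ := exists_convex_minorant_of_forward_subgradient hC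
    (qv := qv) (qc := qc) (fun x hx => (hqc x hx.1).1)
    (fun x hx y hy hxy => hsub x hx.1 y hxy (by linarith [hy.2, hx.1]))
  have hκmono : MonotoneOn κ (Icc 0 C) := by
    intro x hx y hy hxy
    have h₁ : 0 ≤ (y - x) * (qv x + qc x - κ x) :=
      mul_nonneg (by linarith) (by linarith [(hqv x hx.1).1, hκle x hx])
    nlinarith [hκsub x hx y hy hxy]
  set k : ℝ → ℝ := fun v => κ (max 0 (min v C)) with hk
  have hclip : ∀ v, max 0 (min v C) ∈ Icc 0 C := fun v =>
    ⟨le_max_left _ _, max_le hC.le (min_le_right _ _)⟩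
  have hkmono : Monotone k := fun x y hxy =>
    hκmono (hclip x) (hclip y) (max_le_max le_rfl (min_le_min hxy le_rfl))
  have hkκ : ∀ v ∈ Icc 0 C, k v = κ v := fun v hv => by
    simp only [hk]; rw [min_eq_left hv.2, max_eq_right hv.1]
  have hkC : ∀ v, C ≤ v → k v = κ C := fun v hv => by
    simp only [hk]; rw [min_eq_right hv, max_eq_right hC.le]
  have hk0 : ∀ v, 0 ≤ k v := fun v => hκ0 _ (hclip v)
  have hkle : ∀ v, 0 ≤ v → k v ≤ qc v := fun v hv =>
    (hκle _ (hclip v)).trans (hmono (hclip v).1 hv (max_le hv (min_le_left _ _)))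
  have hkm : Measurable k := hkmono.measurable
  have iv : ∀ {a b : ℝ}, 0 ≤ a → a ≤ b → IntervalIntegrable qv volume a b := fun ha hab =>
    intervalIntegrable_of_measurable_of_bounded hmv (B := 1)
      (fun v hv => abs_le.2 ⟨by linarith [(hqv v hv).1], (hqv v hv).2⟩) ha hab
  have ic : ∀ {a b : ℝ}, 0 ≤ a → a ≤ b → IntervalIntegrable qc volume a b := fun ha hab =>
    intervalIntegrable_of_measurable_of_bounded hmc (B := 1)
      (fun v hv => abs_le.2 ⟨by linarith [(hqc v hv).1], (hqc v hv).2⟩) ha hab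
  have ik : ∀ a b : ℝ, IntervalIntegrable k volume a b := fun a b => hkmono.intervalIntegrable
  have below : ∀ v ∈ Icc 0 C, ∫ x in (0 : ℝ)..v, (qv x + qc x + k x) ≤ C * qc v + v * k v := by
    intro v hv
    have h₁ : ∫ x in (0 : ℝ)..v, (qv x + qc x - k x) ≤ C * k v - C * k 0 := by
      refine intervalIntegral_le_sub_of_forward_subgradient (k := fun x => C * k x) hv.1 hC
        ((hkmono.const_mul hC.le).monotoneOn _) (((iv le_rfl hv.1).add (ic le_rfl hv.1)).sub (ik _ _))
        fun x hx y hy hxy _ => ?_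
      have hx' : x ∈ Icc 0 C := ⟨hx.1, hx.2.trans hv.2⟩
      have hy' : y ∈ Icc 0 C := ⟨hy.1, hy.2.trans hv.2⟩
      rw [hkκ x hx', hkκ y hy', ← mul_sub]
      exact hκsub x hx' y hy' hxy
    have h₂ : 2 * ∫ x in (0 : ℝ)..v, k x ≤ v * (k 0 + k v) :=
      ConvexOn.two_mul_intervalIntegral_le hv.1
        ((hconv.subset (Icc_subset_Icc_right hv.2) (convex_Icc 0 v)).congr
          fun x hx => (hkκ x ⟨hx.1, hx.2.trans hv.2⟩).symm) (ik _ _)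
    have h₃ : ∫ x in (0 : ℝ)..v, (qv x + qc x + k x) =
        (∫ x in (0 : ℝ)..v, (qv x + qc x - k x)) + 2 * ∫ x in (0 : ℝ)..v, k x := by
      rw [← intervalIntegral.integral_const_mul, ← intervalIntegral.integral_add
        (((iv le_rfl hv.1).add (ic le_rfl hv.1)).sub (ik _ _)) ((ik _ _).const_mul 2)]
      exact intervalIntegral.integral_congr fun x _ => by ring
    have h₄ : v * k 0 ≤ C * k 0 := mul_le_mul_of_nonneg_right hv.2 (hk0 0)
    have h₅ : C * k v ≤ C * qc v := mul_le_mul_of_nonneg_left (hkle v hv.1) hC.le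
    linarith
  refine ⟨k, hkm, fun v _ => hk0 v, hkle, fun v hv => ?_⟩
  rcases le_total v C with hvC | hCv
  · rw [max_eq_right (by linarith)]
    linarith [below v ⟨hv, hvC⟩]
  · rw [max_eq_left (by linarith)]
    have h₁ := below C ⟨hC.le, le_rfl⟩
    have h₂ : ∫ x in C..v, qv x ≤ C * qc v - C * qc C := by
      refine intervalIntegral_le_sub_of_forward_subgradient (k := fun x => C * qc x) hCv hC
        (fun x hx y hy hxy => ?_) (iv hC.le hCv) fun x hx y hy hxy hyx => ?_
      · exact mul_le_mul_of_nonneg_left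
          (hmono (hC.le.trans hx.1) (hC.le.trans hy.1) hxy) hC.le
      · rw [← mul_sub]
        exact hsub x (hC.le.trans hx.1) y hxy hyx
    have h₃ : ∫ x in C..v, (qc x + k x) ≤ (v - C) * (qc v + k v) := by
      rw [← smul_eq_mul, ← intervalIntegral.integral_const]
      refine intervalIntegral.integral_mono_on hCv ((ic hC.le hCv).add (ik _ _)) (by simp) ?_
      intro x hx
      exact add_le_add (hmono (hC.le.trans hx.1) hv hx.2) (hkmono hx.2)
    have h₄ : ∫ x in C..v, (qv x + qc x + k x) =
        (∫ x in C..v, qv x) + ∫ x in C..v, (qc x + k x) := by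
      rw [← intervalIntegral.integral_add (iv hC.le hCv) ((ic hC.le hCv).add (ik _ _))]
      exact intervalIntegral.integral_congr fun x _ => by ring
    rw [← intervalIntegral.integral_add_adjacent_intervals
      (((iv le_rfl hC.le).add (ic le_rfl hC.le)).add (ik 0 C))
      (((iv hC.le hCv).add (ic hC.le hCv)).add (ik C v)), h₄]
    rw [hkC C le_rfl, ← hkC v hCv] at h₁
    linarith

/-- The expected risk-neutral payment of a bounded allocation `h` is at most its expected
positive virtual surplus. -/
lemma integral_riskNeutral_payment_le {h f F : ℝ → ℝ} {B : ℝ} (hm : Measurable h)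
    (hh0 : ∀ v, 0 ≤ v → 0 ≤ h v) (hhB : ∀ v, 0 ≤ v → h v ≤ B) (hfm : Measurable f)
    (hfpos : ∀ v, 0 ≤ v → 0 < f v)
    (hF : ∀ v, 0 ≤ v → 1 - F v = ∫ t in Ioi v, f t)
    (hmean : IntegrableOn (fun v => v * f v) (Ici 0))
    (hvirt : IntegrableOn (fun v => max (v - (1 - F v) / f v) 0 * h v * f v) (Ici 0)) :
    IntegrableOn (fun v => (v * h v - ∫ x in (0 : ℝ)..v, h x) * f v) (Ici 0) ∧
    ∫ v in Ici (0 : ℝ), (v * h v - ∫ x in (0 : ℝ)..v, h x) * f v ≤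
      ∫ v in Ici (0 : ℝ), max (v - (1 - F v) / f v) 0 * h v * f v := by
  set μ : Measure ℝ := volume.restrict (Ici 0) with hμ
  have hnn : ∀ᵐ v ∂μ, 0 ≤ v := ae_restrict_mem measurableSet_Ici
  have hB : 0 ≤ B := (hh0 0 le_rfl).trans (hhB 0 le_rfl)
  let K : ℝ → ℝ → ℝ := fun t v => (Ioo 0 t).indicator h v * f t
  have hKm : Measurable (Function.uncurry K) := by
    have hset : MeasurableSet {p : ℝ × ℝ | 0 < p.2 ∧ p.2 < p.1} :=
      (measurableSet_lt measurable_const measurable_snd).inter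
        (measurableSet_lt measurable_snd measurable_fst)
    have : Function.uncurry K = fun p : ℝ × ℝ =>
        ({p : ℝ × ℝ | 0 < p.2 ∧ p.2 < p.1}.indicator (fun p => h p.2) p) * f p.1 := by
      ext p
      simp [Function.uncurry, K, indicator]
    rw [this]
    exact ((hm.comp measurable_snd).indicator hset).mul (hfm.comp measurable_fst)
  have hhi : ∀ {a b : ℝ}, 0 ≤ a → a ≤ b → IntervalIntegrable h volume a b := fun ha hab =>
    intervalIntegrable_of_measurable_of_bounded hm (B := B)
      (fun v hv => abs_le.2 ⟨by linarith [hh0 v hv], hhB v hv⟩) ha hab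
  have hIoo : ∀ t, 0 ≤ t → ∫ v, (Ioo 0 t).indicator h v ∂μ = ∫ v in (0 : ℝ)..t, h v := by
    intro t ht
    rw [integral_indicator measurableSet_Ioo, hμ, Measure.restrict_restrict measurableSet_Ioo,
      inter_eq_left.2 (Ioo_subset_Icc_self.trans Icc_subset_Ici_self),
      intervalIntegral.integral_of_le ht, integral_Ioc_eq_integral_Ioo]
  have hle : ∀ t, 0 ≤ t → ∫ v in (0 : ℝ)..t, h v ≤ B * t := by
    intro t ht
    have := intervalIntegral.integral_mono_on ht (hhi le_rfl ht)
      (by simp : IntervalIntegrable (fun _ => B) volume 0 t) (fun x hx => hhB x hx.1)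
    simpa [mul_comm] using this
  have hge : ∀ t, 0 ≤ t → 0 ≤ ∫ v in (0 : ℝ)..t, h v := fun t ht =>
    intervalIntegral.integral_nonneg ht fun x hx => hh0 x hx.1
  have hinner : ∀ t, 0 ≤ t → ∫ v, K t v ∂μ = (∫ v in (0 : ℝ)..t, h v) * f t := by
    intro t ht
    rw [integral_mul_const, hIoo t ht]
  have hKint : Integrable (Function.uncurry K) (μ.prod μ) := by
    rw [integrable_prod_iff hKm.aestronglyMeasurable]
    refine ⟨?_, ?_⟩
    · filter_upwards [hnn] with t ht
      refine Integrable.mul_const (f := (Ioo 0 t).indicator h) ?_ (f t)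
      rw [integrable_indicator_iff measurableSet_Ioo]
      refine IntegrableOn.mono_measure ?_ Measure.restrict_le_self
      exact ((intervalIntegrable_iff_integrableOn_Ioo_of_le ht).1 (hhi le_rfl ht))
    · refine (hmean.const_mul B).mono'
        (hKm.aestronglyMeasurable.norm.integral_prod_right') ?_
      filter_upwards [hnn] with t ht
      have hn : ∀ v, ‖Function.uncurry K (t, v)‖ = K t v := by
        intro v
        refine Real.norm_of_nonneg (mul_nonneg (indicator_nonneg (fun x hx => ?_) _) (hfpos t ht).le)
        exact hh0 x hx.1.le
      simp only [hn]
      rw [hinner t ht, Real.norm_of_nonneg (mul_nonneg (hge t ht) (hfpos t ht).le)]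
      nlinarith [hle t ht, hfpos t ht]
  have hpay : Integrable (fun t => (∫ x in (0 : ℝ)..t, h x) * f t) μ := by
    refine hKint.integral_prod_left.congr ?_
    filter_upwards [hnn] with t ht using hinner t ht
  have htail : ∀ v, 0 < v → ∫ t, K t v ∂μ = (1 - F v) * h v := by
    intro v hv
    have : (fun t => K t v) = fun t => h v * (Ioi v).indicator f t := by
      ext t
      by_cases htv : v < t <;> simp [K, indicator, hv, htv]
    rw [this, integral_const_mul, integral_indicator measurableSet_Ioi, hμ,
      Measure.restrict_restrict measurableSet_Ioi,
      inter_eq_left.2 ((Ioi_subset_Ioi hv.le).trans Ioi_subset_Ici_self), hF v hv.le, mul_comm]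
  have hpos : ∀ᵐ v ∂μ, 0 < v := by
    rw [hμ, ← restrict_Ioi_eq_restrict_Ici]
    exact ae_restrict_mem measurableSet_Ioi
  have hrent : Integrable (fun v => (1 - F v) * h v) μ := by
    refine hKint.integral_prod_right.congr ?_
    filter_upwards [hpos] with v hv using htail v hv
  have hswap : ∫ t, (∫ x in (0 : ℝ)..t, h x) * f t ∂μ = ∫ v, (1 - F v) * h v ∂μ := by
    calc _ = ∫ t, ∫ v, K t v ∂μ ∂μ := integral_congr_ae <| by
            filter_upwards [hnn] with t ht using (hinner t ht).symm
      _ = ∫ v, ∫ t, K t v ∂μ ∂μ := integral_integral_swap hKint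
      _ = _ := integral_congr_ae <| by
            filter_upwards [hpos] with v hv using htail v hv
  have hsurplus : Integrable (fun v => v * h v * f v) μ := by
    refine (hmean.const_mul B).mono' (by fun_prop) ?_
    filter_upwards [hnn] with v hv
    have := hfpos v hv
    rw [Real.norm_of_nonneg (mul_nonneg (mul_nonneg hv (hh0 v hv)) this.le)]
    nlinarith [mul_le_mul_of_nonneg_left (hhB v hv) (mul_nonneg hv this.le)]
  refine ⟨(hsurplus.sub hpay).congr (Filter.Eventually.of_forall fun v => ?_), ?_⟩
  · simp only [Pi.sub_apply]; ring
  calc _ = ∫ v, (v * h v * f v - (∫ x in (0 : ℝ)..v, h x) * f v) ∂μ :=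
        integral_congr_ae (Filter.Eventually.of_forall fun v => by ring)
    _ = ∫ v, (v * h v * f v - (1 - F v) * h v) ∂μ := by
        rw [integral_sub hsurplus hpay, integral_sub hsurplus hrent, hswap]
    _ ≤ _ := by
        refine integral_mono_ae (hsurplus.sub hrent) hvirt ?_
        filter_upwards [hnn] with v hv
        have hf := hfpos v hv
        have heq : v * h v * f v - (1 - F v) * h v = (v - (1 - F v) / f v) * h v * f v := by
          field_simp
        rw [heq]
        exact mul_le_mul_of_nonneg_right
          (mul_le_mul_of_nonneg_right (le_max_left _ _) (hh0 v hv)) hf.le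

/-- For a measurable BIC two-priced mechanism `(q_v, q_c)` with capacity
`C > 0` and a value distribution on `[0,∞)` with CDF `F`, density `f > 0`, and finite
mean, the expected payment is at most
`E[φ⁺(V)·q(V)] + E[φ⁺(V)·q_c(V)] + E[(V − C)⁺·q_c(V)]`,
where `q = q_v + q_c`, `p(v) = v·q(v) − C·q_c(v)`, and `φ(v) = v − (1 − F(v))/f(v)`. -/
theorem two_priced_payment_upper_bound
    (C : ℝ) (hC : 0 < C)
    (qv qc : ℝ → ℝ) (hmv : Measurable qv) (hmc : Measurable qc)
    (hqv : ∀ v, 0 ≤ v → qv v ∈ Icc (0 : ℝ) 1)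
    (hqc : ∀ v, 0 ≤ v → qc v ∈ Icc (0 : ℝ) 1)
    (hsum : ∀ v, 0 ≤ v → qv v + qc v ≤ 1)
    (hBIC : ∀ v, 0 ≤ v → ∀ v', 0 ≤ v' →
        qv v * min (v - v) C + qc v * min (v - v + C) C ≥
          qv v' * min (v - v') C + qc v' * min (v - v' + C) C)
    (f F : ℝ → ℝ) (hfm : Measurable f)
    (hfpos : ∀ v, 0 ≤ v → 0 < f v)
    (hprob : ∫ v in Ici (0 : ℝ), f v = 1)
    (hF : ∀ v, F v = ∫ t in (0 : ℝ)..v, f t)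
    (hmean : IntegrableOn (fun v => v * f v) (Ici 0)) :
    (∫ v in Ici (0 : ℝ), (v * (qv v + qc v) - C * qc v) * f v) ≤
      (∫ v in Ici (0 : ℝ), max (v - (1 - F v) / f v) 0 * (qv v + qc v) * f v) +
        (∫ v in Ici (0 : ℝ), max (v - (1 - F v) / f v) 0 * qc v * f v) +
          (∫ v in Ici (0 : ℝ), max (v - C) 0 * qc v * f v) := by
  have hmono : MonotoneOn qc (Ici 0) := by
    intro x hx y hy hxy
    have h := hBIC y hy x hx
    rw [sub_self, min_eq_left hC.le, zero_add, min_self,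
      min_eq_right (show C ≤ y - x + C by linarith)] at h
    have h₁ : 0 ≤ qv x * min (y - x) C :=
      mul_nonneg (hqv x hx).1 (le_min (by linarith) hC.le)
    exact le_of_mul_le_mul_right (by linarith) hC
  have hsub : ∀ x, 0 ≤ x → ∀ y, x ≤ y → y ≤ x + C →
      (y - x) * qv x ≤ C * (qc y - qc x) := by
    intro x hx y hxy hyx
    have h := hBIC y (hx.trans hxy) x hx
    rw [sub_self, min_eq_left hC.le, zero_add, min_self,
      min_eq_right (show C ≤ y - x + C by linarith),
      min_eq_left (show y - x ≤ C by linarith)] at h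
    linarith
  obtain ⟨k, hkm, hk0, hkle, hpay⟩ :=
    exists_allocation_payment_le hC hmv hmc hqv hqc hmono hsub
  have hfint : IntegrableOn f (Ici 0) := by
    by_contra hf
    rw [integral_undef hf] at hprob
    exact zero_ne_one hprob
  have hnn : ∀ᵐ v ∂(volume.restrict (Ici (0 : ℝ))), 0 ≤ v := ae_restrict_mem measurableSet_Ici
  have hFtail : ∀ v, 0 ≤ v → 1 - F v = ∫ t in Ioi v, f t := by
    intro v hv
    rw [hF v, ← hprob, integral_Ici_eq_integral_Ioi,
      ← intervalIntegral.integral_interval_add_Ioi (hfint.mono_set Ioi_subset_Ici_self)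
        (hfint.mono_set ((Ioi_subset_Ioi hv).trans Ioi_subset_Ici_self))]
    ring
  have hFtail0 : ∀ v, 0 ≤ v → 0 ≤ 1 - F v := by
    intro v hv
    rw [hFtail v hv]
    exact setIntegral_nonneg measurableSet_Ioi fun t ht => (hfpos t (hv.trans (le_of_lt ht))).le
  have hFm : AEMeasurable F (volume.restrict (Ici 0)) := by
    refine aemeasurable_restrict_of_monotoneOn measurableSet_Ici fun x hx y hy hxy => ?_
    have h : ∫ t in Ioi y, f t ≤ ∫ t in Ioi x, f t :=
      setIntegral_mono_set (hfint.mono_set ((Ioi_subset_Ioi hx).trans Ioi_subset_Ici_self))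
        ((ae_restrict_mem measurableSet_Ioi).mono fun t ht => (hfpos t (hx.trans (le_of_lt ht))).le)
        (Ioi_subset_Ioi hxy).eventuallyLE
    linarith [hFtail x hx, hFtail y hy]
  have hvirt : ∀ g : ℝ → ℝ, Measurable g → (∀ v, 0 ≤ v → 0 ≤ g v) → (∀ v, 0 ≤ v → g v ≤ 3) →
      IntegrableOn (fun v => max (v - (1 - F v) / f v) 0 * g v * f v) (Ici 0) := by
    intro g hg hg0 hg3
    have hmeas : AEMeasurable (fun v => max (v - (1 - F v) / f v) 0 * g v * f v)
        (volume.restrict (Ici 0)) :=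
      (((aemeasurable_id.sub ((aemeasurable_const.sub hFm).div hfm.aemeasurable)).max
        aemeasurable_const).mul hg.aemeasurable).mul hfm.aemeasurable
    refine (hmean.const_mul 3).mono' hmeas.aestronglyMeasurable ?_
    filter_upwards [hnn] with v hv
    have hf := hfpos v hv
    have hle : max (v - (1 - F v) / f v) 0 ≤ v :=
      max_le (by linarith [div_nonneg (hFtail0 v hv) hf.le]) hv
    rw [Real.norm_of_nonneg (mul_nonneg (mul_nonneg (le_max_right _ _) (hg0 v hv)) hf.le),
      ← mul_assoc]
    refine mul_le_mul_of_nonneg_right ?_ hf.le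
    rw [mul_comm]
    exact mul_le_mul (hg3 v hv) hle (le_max_right _ _) (by norm_num)
  have hexc : IntegrableOn (fun v => max (v - C) 0 * qc v * f v) (Ici 0) := by
    refine hmean.mono' (by fun_prop) ?_
    filter_upwards [hnn] with v hv
    have hf := hfpos v hv
    rw [Real.norm_of_nonneg (mul_nonneg (mul_nonneg (le_max_right _ _) (hqc v hv).1) hf.le)]
    refine mul_le_mul_of_nonneg_right ?_ hf.le
    exact (mul_le_of_le_one_right (le_max_right _ _) (hqc v hv).2).trans
      (max_le (by linarith) hv)
  have hpmt : IntegrableOn (fun v => (v * (qv v + qc v) - C * qc v) * f v) (Ici 0) := by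
    refine (hmean.add (hfint.const_mul C)).mono' (by fun_prop) ?_
    filter_upwards [hnn] with v hv
    have hf := hfpos v hv
    obtain ⟨hv0, hv1⟩ := hqv v hv
    obtain ⟨hc0, hc1⟩ := hqc v hv
    have hs := hsum v hv
    rw [norm_mul, Real.norm_of_nonneg hf.le, Pi.add_apply, ← add_mul]
    refine mul_le_mul_of_nonneg_right (abs_le.2 ⟨?_, ?_⟩) hf.le <;> nlinarith
  have hq0 : ∀ v, 0 ≤ v → 0 ≤ qv v + qc v := fun v hv => add_nonneg (hqv v hv).1 (hqc v hv).1
  have hh0 : ∀ v, 0 ≤ v → 0 ≤ qv v + qc v + k v := fun v hv => add_nonneg (hq0 v hv) (hk0 v hv)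
  have hh3 : ∀ v, 0 ≤ v → qv v + qc v + k v ≤ 3 := fun v hv => by
    linarith [hsum v hv, hkle v hv, (hqc v hv).2]
  have hqm : Measurable fun v => qv v + qc v := hmv.add hmc
  have hhm : Measurable fun v => qv v + qc v + k v := hqm.add hkm
  have hvh := hvirt _ hhm hh0 hh3
  have hvq := hvirt _ hqm hq0 fun v hv => by
    linarith [hh3 v hv, hk0 v hv]
  have hvc := hvirt _ hmc (fun v hv => (hqc v hv).1) fun v hv => by linarith [(hqc v hv).2]
  obtain ⟨hrni, hrn⟩ := integral_riskNeutral_payment_le hhm hh0 hh3 hfm hfpos hFtail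
    hmean hvh
  have h₁ : ∫ v in Ici (0 : ℝ), (v * (qv v + qc v) - C * qc v) * f v ≤
      (∫ v in Ici (0 : ℝ), (v * (qv v + qc v + k v) -
        ∫ x in (0 : ℝ)..v, (qv x + qc x + k x)) * f v) +
      ∫ v in Ici (0 : ℝ), max (v - C) 0 * qc v * f v := by
    rw [← integral_add hrni hexc]
    refine integral_mono_ae hpmt (hrni.add hexc) ?_
    filter_upwards [hnn] with v hv
    have := mul_le_mul_of_nonneg_right (hpay v hv) (hfpos v hv).le
    linarith
  have h₂ : ∫ v in Ici (0 : ℝ), max (v - (1 - F v) / f v) 0 * (qv v + qc v + k v) * f v ≤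
      (∫ v in Ici (0 : ℝ), max (v - (1 - F v) / f v) 0 * (qv v + qc v) * f v) +
        ∫ v in Ici (0 : ℝ), max (v - (1 - F v) / f v) 0 * qc v * f v := by
    rw [← integral_add hvq hvc]
    refine integral_mono_ae hvh (hvq.add hvc) ?_
    filter_upwards [hnn] with v hv
    have := mul_le_mul_of_nonneg_right (mul_le_mul_of_nonneg_left (hkle v hv)
      (le_max_right (v - (1 - F v) / f v) 0)) (hfpos v hv).le
    linarith
  exact h₁.trans (by gcongr; exact hrn.trans h₂)
end

section
/- Let C > 0 and let (q_v, q_c) be a BIC two-priced mechanism with capacity C. Define r(v) = (1/C)·sup{ q_v(z) : 0 ≤ z ≤ v }, and q̄_c(v) = ∫_0^v r(y) dy for v ∈ [0, C] and q̄_c(v) = q_c(v) for v > C. Then q̄_c(v) ≤ q_c(v) for all v ≥ 0; consequently q_v(v) + q̄_c(v) ≤ q_v(v) + q_c(v) for all v, and the payment p̄(v) = v·(q_v(v) + q̄_c(v)) − C·q̄_c(v) satisfies p̄(v) ≥ p(v) = v·(q_v(v) + q_c(v)) − C·q_c(v) for all v ≥ 0. -/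
open Set

/-- The integral of a monotone function is at most the interval length times the right value. -/
lemma MonotoneOn.integral_sub_le {r : ℝ → ℝ} {b : ℝ} (hr : MonotoneOn r (Icc 0 b)) {x y : ℝ}
    (hx : 0 ≤ x) (hxy : x ≤ y) (hy : y ≤ b) :
    (∫ t in (0 : ℝ)..y, r t) - ∫ t in (0 : ℝ)..x, r t ≤ (y - x) * r y := by
  have hint : ∀ s t, 0 ≤ s → s ≤ t → t ≤ b →
      IntervalIntegrable r MeasureTheory.volume s t := fun s t hs hst ht =>
    MonotoneOn.intervalIntegrable <| hr.mono <| by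
      rw [uIcc_of_le hst]
      exact Icc_subset_Icc hs ht
  rw [intervalIntegral.integral_interval_sub_left
    (hint 0 y le_rfl (hx.trans hxy) hy) (hint 0 x le_rfl hx (hxy.trans hy))]
  calc ∫ t in x..y, r t ≤ ∫ _ in x..y, r y :=
        intervalIntegral.integral_mono_on hxy (hint x y hx hxy hy) intervalIntegrable_const
          fun t ht => hr ⟨hx.trans ht.1, ht.2.trans hy⟩ ⟨hx.trans hxy, hy⟩ ht.2
    _ = (y - x) * r y := by simp

/-- Let `f ≥ 0` lie above each ray that starts at `(z, f z)` with slope `g z`. If `r` is monotone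
and `r v` is approximated by values of `g` on `[0, v]`, then `f` dominates the primitive of `r`.
The proof compares `f v` with the primitive at `v - δ`, which makes the approximating points
descend by steps of size at least `δ`. -/
lemma integral_le_of_forward_slope {f g r : ℝ → ℝ} {b : ℝ}
    (hf : ∀ v ∈ Icc 0 b, 0 ≤ f v)
    (hslope : ∀ z ∈ Icc 0 b, ∀ y ∈ Icc z b, f z + (y - z) * g z ≤ f y)
    (hr : MonotoneOn r (Icc 0 b)) (hr0 : ∀ v ∈ Icc 0 b, 0 ≤ r v)
    (happrox : ∀ v ∈ Icc 0 b, ∀ ε > 0, ∃ z ∈ Icc 0 v, r v - ε ≤ g z)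
    {v : ℝ} (hv : v ∈ Icc 0 b) : ∫ y in (0 : ℝ)..v, r y ≤ f v := by
  have shifted : ∀ δ > 0, ∀ n : ℕ, ∀ w, 0 ≤ w → w + δ ≤ b → w ≤ n * δ →
      ∫ y in (0 : ℝ)..w, r y ≤ f (w + δ) + δ * (w + δ) := by
    intro δ hδ n
    induction n with
    | zero =>
      intro w hw hwb hwn
      obtain rfl : w = 0 := le_antisymm (by simpa using hwn) hw
      have := hf (0 + δ) ⟨by linarith, hwb⟩
      rw [intervalIntegral.integral_same]
      positivity
    | succ n ih =>
      intro w hw hwb hwn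
      push_cast at hwn
      have hwI : w ∈ Icc 0 b := ⟨hw, by linarith⟩
      obtain ⟨z, hz, hgz⟩ := happrox w hwI δ hδ
      have hzI : z ∈ Icc 0 b := ⟨hz.1, hz.2.trans hwI.2⟩
      have hray := hslope z hzI (w + δ) ⟨by linarith [hz.2], hwb⟩
      have hgap : (w + δ - z) * (r w - δ) ≤ (w + δ - z) * g z :=
        mul_le_mul_of_nonneg_left hgz (by linarith [hz.2])
      rcases le_total z δ with hzδ | hzδ
      · have hF := hr.integral_sub_le le_rfl hw hwI.2
        rw [intervalIntegral.integral_same] at hF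
        nlinarith [hf z hzI, mul_nonneg (sub_nonneg.2 hzδ) (hr0 w hwI), mul_nonneg hδ.le hz.1]
      · have hF := hr.integral_sub_le (sub_nonneg.2 hzδ) (by linarith [hz.2] : z - δ ≤ w) hwI.2
        have hprev := ih (z - δ) (sub_nonneg.2 hzδ) (by linarith [hzI.2]) (by linarith [hz.2])
        rw [sub_add_cancel] at hprev
        linarith
  rcases hv.1.eq_or_lt with rfl | hpos
  · simpa using hf 0 hv
  refine le_of_forall_pos_le_add fun e he => ?_
  have hrv := hr0 v hv
  have hden : 0 < v + r v + 1 := by positivity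
  obtain ⟨δ, hδ, hδv, hδe⟩ : ∃ δ > 0, δ ≤ v ∧ δ * (v + r v + 1) ≤ e :=
    ⟨min v (e / (v + r v + 1)), lt_min hpos (div_pos he hden), min_le_left _ _,
      (le_div_iff₀ hden).1 (min_le_right _ _)⟩
  obtain ⟨n, hn⟩ := exists_nat_ge ((v - δ) / δ)
  have hshift := shifted δ hδ n (v - δ) (sub_nonneg.2 hδv) (by linarith [hv.2])
    ((div_le_iff₀ hδ).1 hn)
  rw [sub_add_cancel] at hshift
  have hF := hr.integral_sub_le (sub_nonneg.2 hδv) (by linarith : v - δ ≤ v) hv.2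
  linarith

/-- For a BIC two-priced mechanism `(q_v, q_c)` with capacity `C > 0`, the
convexified rule `q̄_c` (equal to `∫_0^v r` on `[0,C]` with
`r(v) = (1/C)·sup_{0 ≤ z ≤ v} q_v(z)`, and equal to `q_c` above `C`) satisfies
`q̄_c ≤ q_c` pointwise, hence `q_v + q̄_c ≤ q_v + q_c` and the corresponding payment
`p̄(v) = v·(q_v(v) + q̄_c(v)) − C·q̄_c(v)` dominates `p(v) = v·(q_v(v)+q_c(v)) − C·q_c(v)`. -/
theorem qcbar_below_qc_and_payment_dominates
    (C : ℝ) (hC : 0 < C)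
    (qv qc : ℝ → ℝ)
    (hqv : ∀ v, 0 ≤ v → qv v ∈ Icc (0 : ℝ) 1)
    (hqc : ∀ v, 0 ≤ v → qc v ∈ Icc (0 : ℝ) 1)
    (hsum : ∀ v, 0 ≤ v → qv v + qc v ≤ 1)
    (hBIC : ∀ v, 0 ≤ v → ∀ v', 0 ≤ v' →
        qv v * min (v - v) C + qc v * min (v - v + C) C ≥
          qv v' * min (v - v') C + qc v' * min (v - v' + C) C)
    (r : ℝ → ℝ) (hr : ∀ v, 0 ≤ v → r v = (1 / C) * sSup (qv '' Icc 0 v))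
    (qcbar : ℝ → ℝ)
    (hqcbar1 : ∀ v ∈ Icc (0 : ℝ) C, qcbar v = ∫ y in (0 : ℝ)..v, r y)
    (hqcbar2 : ∀ v, C < v → qcbar v = qc v) :
    (∀ v, 0 ≤ v → qcbar v ≤ qc v) ∧
      (∀ v, 0 ≤ v → qv v + qcbar v ≤ qv v + qc v) ∧
        (∀ v, 0 ≤ v →
          v * (qv v + qcbar v) - C * qcbar v ≥ v * (qv v + qc v) - C * qc v) := by
  have hbdd : ∀ v, BddAbove (qv '' Icc 0 v) := fun v => ⟨1, by
    rintro _ ⟨z, hz, rfl⟩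
    exact (hqv z hz.1).2⟩
  have hCinv : 0 < 1 / C := one_div_pos.2 hC
  have hbelow : ∀ v ∈ Icc 0 C, qcbar v ≤ qc v := by
    intro v hv
    rw [hqcbar1 v hv]
    refine integral_le_of_forward_slope (g := fun z => (1 / C) * qv z) (b := C)
      (fun v hv => (hqc v hv.1).1) ?_ ?_ ?_ ?_ hv
    · intro z hz y hy
      have hIC := hBIC y (hz.1.trans hy.1) z hz.1
      rw [sub_self, zero_add, min_self, min_eq_left hC.le,
        min_eq_left (by linarith [hy.2, hz.1] : y - z ≤ C),
        min_eq_right (by linarith [hy.1] : C ≤ y - z + C)] at hIC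
      have hscaled := mul_le_mul_of_nonneg_left hIC hCinv.le
      field_simp at hscaled ⊢
      linarith
    · intro x hx y hy hxy
      rw [hr x hx.1, hr y hy.1]
      exact mul_le_mul_of_nonneg_left (csSup_le_csSup (hbdd y)
        ⟨qv 0, 0, ⟨le_rfl, hx.1⟩, rfl⟩ (image_mono (Icc_subset_Icc_right hxy))) hCinv.le
    · intro v hv
      rw [hr v hv.1]
      exact mul_nonneg hCinv.le ((hqv 0 le_rfl).1.trans
        (le_csSup (hbdd v) ⟨0, ⟨le_rfl, hv.1⟩, rfl⟩))
    · intro v hv ε hε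
      obtain ⟨_, ⟨z, hz, rfl⟩, hlt⟩ := exists_lt_of_lt_csSup
        (⟨qv 0, 0, ⟨le_rfl, hv.1⟩, rfl⟩ : (qv '' Icc 0 v).Nonempty)
        (sub_lt_self _ (mul_pos hC hε))
      refine ⟨z, hz, ?_⟩
      rw [hr v hv.1]
      have hscaled := mul_le_mul_of_nonneg_left hlt.le hCinv.le
      rwa [mul_sub, ← mul_assoc (1 / C) C, one_div_mul_cancel hC.ne', one_mul] at hscaled
  have hle : ∀ v, 0 ≤ v → qcbar v ≤ qc v := fun v hv =>
    (le_or_gt v C).elim (fun h => hbelow v ⟨hv, h⟩) fun h => (hqcbar2 v h).le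
  refine ⟨hle, fun v hv => by linarith [hle v hv], fun v hv => ?_⟩
  rcases le_or_gt v C with h | h
  · nlinarith [mul_nonneg (sub_nonneg.2 h) (sub_nonneg.2 (hle v hv))]
  · rw [hqcbar2 v h]
end

section
/- Let C > 0 and let (q_v, q_c) be a measurable BIC two-priced mechanism with capacity C. Define r(v) = (1/C)·sup{ q_v(z) : 0 ≤ z ≤ v }, and q̄_c(v) = ∫_0^v r(y) dy for v ∈ [0, C] and q̄_c(v) = q_c(v) for v > C. Then for all 0 ≤ v < v': ∫_v^{v'} q_v(z) dz ≤ C·(q̄_c(v') − q̄_c(v)). -/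
open Set

/-- The running supremum of a bounded function is monotone. -/
theorem monotoneOn_sSup_image_Icc {g : ℝ → ℝ} {a b : ℝ} (hg : BddAbove (g '' Icc a b)) :
    MonotoneOn (fun y => sSup (g '' Icc a y)) (Icc a b) := fun _ hx _ hy hxy =>
  csSup_le_csSup (hg.mono (image_mono (Icc_subset_Icc_right hy.2)))
    ((nonempty_Icc.2 hx.1).image g) (image_mono (Icc_subset_Icc_right hxy))

/-- If `g z` is a slope of `f` to the right of every `z`, then the increment of `f` dominates the
integral of the running supremum of `g`. -/
theorem integral_sSup_image_Icc_le_sub {f g : ℝ → ℝ} {a b : ℝ} (hab : a ≤ b)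
    (hf : ContinuousOn f (Icc a b)) (hg : BddAbove (g '' Icc a b))
    (hfg : ∀ z x, a ≤ z → z ≤ x → x ≤ b → g z * (x - z) ≤ f x - f z) :
    ∫ y in a..b, sSup (g '' Icc a y) ≤ f b - f a := by
  set G : ℝ → ℝ := fun y => sSup (g '' Icc a y)
  have hint : ∀ x y, a ≤ x → x ≤ y → y ≤ b → IntervalIntegrable G MeasureTheory.volume x y := by
    intro x y hx hxy hy
    apply MonotoneOn.intervalIntegrable
    rw [uIcc_of_le hxy]
    exact (monotoneOn_sSup_image_Icc hg).mono (Icc_subset_Icc hx hy)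
  have hcont : ContinuousOn (fun x => ∫ y in a..x, G y) (Icc a b) := by
    have h := intervalIntegral.continuousOn_primitive_interval' (hint a b le_rfl hab le_rfl)
      left_mem_uIcc
    rwa [uIcc_of_le hab] at h
  refine le_of_forall_pos_le_add fun δ hδ => ?_
  obtain ⟨ε, hε, hεδ⟩ : ∃ ε > 0, ε * (b - a) ≤ δ := by
    refine ⟨δ / (b - a + 1), by apply div_pos hδ; linarith, ?_⟩
    rw [div_mul_eq_mul_div, div_le_iff₀ (by linarith)]
    nlinarith
  obtain ⟨x, hx, hmin⟩ := isCompact_Icc.exists_isMinOn (nonempty_Icc.2 hab)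
    ((hf.sub hcont).add ((continuous_const.mul continuous_id).continuousOn :
      ContinuousOn (fun x : ℝ => ε * x) (Icc a b)))
  have hmin : ∀ z ∈ Icc a b, f x - (∫ y in a..x, G y) + ε * x ≤
      f z - (∫ y in a..z, G y) + ε * z := fun z hz => hmin hz
  rcases hx.1.eq_or_lt with rfl | hax
  · have h := hmin b ⟨hab, le_rfl⟩
    rw [intervalIntegral.integral_same] at h
    linarith
  exfalso
  have hbdd : BddAbove (g '' Ico a x) :=
    hg.mono (image_mono (Ico_subset_Icc_self.trans (Icc_subset_Icc_right hx.2)))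
  obtain ⟨_, ⟨z, hz, rfl⟩, hzS⟩ := exists_lt_of_lt_csSup ((nonempty_Ico.2 hax).image g)
    (sub_lt_self (sSup (g '' Ico a x)) hε)
  have hzb : z ∈ Icc a b := ⟨hz.1, hz.2.le.trans hx.2⟩
  have hint_le : ∫ y in z..x, G y ≤ sSup (g '' Ico a x) * (x - z) := by
    have h : ∫ y in z..x, G y ≤ ∫ _ in z..x, sSup (g '' Ico a x) := by
      apply intervalIntegral.integral_mono_on_of_le_Ioo hz.2.le (hint z x hz.1 hz.2.le hx.2)
        intervalIntegrable_const
      intro y hy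
      exact csSup_le_csSup hbdd ((nonempty_Icc.2 (hz.1.trans hy.1.le)).image g)
        (image_mono fun w hw => ⟨hw.1, hw.2.trans_lt hy.2⟩)
    rw [intervalIntegral.integral_const, smul_eq_mul] at h
    linarith
  have hsplit := intervalIntegral.integral_add_adjacent_intervals
    (hint a z le_rfl hz.1 hzb.2) (hint z x hz.1 hz.2.le hx.2)
  have hslope := hfg z x hz.1 hz.2.le hx.2
  have hmz := hmin z hzb
  nlinarith [mul_pos (sub_pos.2 hzS) (sub_pos.2 hz.2)]

/-- A function bounded above is dominated in integral by its running supremum. -/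
theorem integral_le_integral_sSup_image_Icc {g : ℝ → ℝ} {a v b : ℝ} (hav : a ≤ v) (hvb : v ≤ b)
    (hg : BddAbove (g '' Icc a b)) (hint : IntervalIntegrable g MeasureTheory.volume v b) :
    ∫ y in v..b, g y ≤ ∫ y in v..b, sSup (g '' Icc a y) := by
  apply intervalIntegral.integral_mono_on hvb hint
  · apply MonotoneOn.intervalIntegrable
    rw [uIcc_of_le hvb]
    exact (monotoneOn_sSup_image_Icc hg).mono (Icc_subset_Icc_left hav)
  · intro y hy
    exact le_csSup (hg.mono (image_mono (Icc_subset_Icc_right hy.2)))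
      ⟨y, ⟨hav.trans hy.1, le_rfl⟩, rfl⟩

/-- A bound on increments over intervals of length at most `C` extends to all intervals. -/
theorem integral_le_sub_of_short {f g : ℝ → ℝ} {C : ℝ} (hC : 0 < C)
    (hint : ∀ a b, 0 ≤ a → a ≤ b → IntervalIntegrable g MeasureTheory.volume a b)
    (hshort : ∀ a b, 0 ≤ a → a ≤ b → b ≤ a + C → ∫ y in a..b, g y ≤ f b - f a)
    {a b : ℝ} (ha : 0 ≤ a) (hab : a ≤ b) : ∫ y in a..b, g y ≤ f b - f a := by
  obtain ⟨n, hn⟩ := exists_nat_ge ((b - a) / C)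
  rw [div_le_iff₀ hC] at hn
  induction n generalizing a with
  | zero => exact hshort a b ha hab (by push_cast at hn; linarith)
  | succ n ih =>
    push_cast at hn
    rcases le_total b (a + C) with h | h
    · exact hshort a b ha hab h
    · have h₁ := hshort a (a + C) ha (by linarith) le_rfl
      have h₂ := ih (a := a + C) (by linarith) h (by linarith)
      rw [← intervalIntegral.integral_add_adjacent_intervals
        (hint a (a + C) ha (by linarith)) (hint (a + C) b (by linarith) h)]
      linarith

/-- For a measurable BIC two-priced mechanism `(q_v, q_c)` with capacity
`C > 0`, the convexified rule `q̄_c` satisfies the lower incentive bound in integral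
form: for all `0 ≤ v < v'`, `∫_v^{v'} q_v(z) dz ≤ C·(q̄_c(v') − q̄_c(v))`. -/
theorem qcbar_integral_lower_IC
    (C : ℝ) (hC : 0 < C)
    (qv qc : ℝ → ℝ) (hmv : Measurable qv) (hmc : Measurable qc)
    (hqv : ∀ v, 0 ≤ v → qv v ∈ Icc (0 : ℝ) 1)
    (hqc : ∀ v, 0 ≤ v → qc v ∈ Icc (0 : ℝ) 1)
    (hsum : ∀ v, 0 ≤ v → qv v + qc v ≤ 1)
    (hBIC : ∀ v, 0 ≤ v → ∀ v', 0 ≤ v' →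
        qv v * min (v - v) C + qc v * min (v - v + C) C ≥
          qv v' * min (v - v') C + qc v' * min (v - v' + C) C)
    (r : ℝ → ℝ) (hr : ∀ v, 0 ≤ v → r v = (1 / C) * sSup (qv '' Icc 0 v))
    (qcbar : ℝ → ℝ)
    (hqcbar1 : ∀ v ∈ Icc (0 : ℝ) C, qcbar v = ∫ y in (0 : ℝ)..v, r y)
    (hqcbar2 : ∀ v, C < v → qcbar v = qc v) :
    ∀ v v' : ℝ, 0 ≤ v → v < v' →
      (∫ z in v..v', qv z) ≤ C * (qcbar v' - qcbar v) := by
  have hbdd : ∀ a b, 0 ≤ a → BddAbove (qv '' Icc a b) := by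
    rintro a b ha
    refine ⟨1, ?_⟩
    rintro _ ⟨z, hz, rfl⟩
    exact (hqv z (ha.trans hz.1)).2
  have hint : ∀ a b, 0 ≤ a → a ≤ b → IntervalIntegrable qv MeasureTheory.volume a b := by
    intro a b ha hab
    rw [intervalIntegrable_iff_integrableOn_Icc_of_le hab]
    refine MeasureTheory.Measure.integrableOn_of_bounded (M := 1) (by simp)
      hmv.aestronglyMeasurable ?_
    filter_upwards [MeasureTheory.ae_restrict_mem measurableSet_Icc] with z hz
    have h := hqv z (ha.trans hz.1)
    rw [Real.norm_of_nonneg h.1]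
    exact h.2
  have hslope : ∀ z x, 0 ≤ z → z ≤ x → x ≤ z + C →
      qv z * (x - z) ≤ C * qc x - C * qc z := by
    intro z x hz hzx hxz
    have h := hBIC x (hz.trans hzx) z hz
    rw [min_eq_left (by linarith), min_eq_right (by linarith), min_eq_left (by linarith),
      min_eq_right (by linarith)] at h
    linarith
  have hupper : ∀ z x, 0 ≤ z → z ≤ x → C * qc x - C * qc z ≤ x - z := by
    intro z x hz hzx
    have h := hBIC z hz x (hz.trans hzx)
    rw [min_eq_left (by linarith), min_eq_right (by linarith), min_eq_left (by linarith),
      min_eq_left (by linarith)] at h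
    nlinarith [hsum x (hz.trans hzx)]
  have hlower : ∀ z x, 0 ≤ z → z ≤ x → 0 ≤ C * qc x - C * qc z := by
    intro z x hz hzx
    have h := hBIC x (hz.trans hzx) z hz
    rw [min_eq_left (by linarith), min_eq_right (by linarith),
      min_eq_right (by linarith : C ≤ x - z + C)] at h
    have := mul_nonneg (hqv z hz).1 (le_min (sub_nonneg.2 hzx) hC.le)
    linarith
  have hcont : ContinuousOn (fun x => C * qc x) (Ici 0) := by
    refine (LipschitzOnWith.of_dist_le_mul (K := 1) fun x hx y hy => ?_).continuousOn
    rw [Real.dist_eq, Real.dist_eq, NNReal.coe_one, one_mul]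
    rcases le_total x y with h | h
    · rw [abs_sub_comm, abs_sub_comm x, abs_of_nonneg (hlower x y hx h),
        abs_of_nonneg (sub_nonneg.2 h)]
      exact hupper x y hx h
    · rw [abs_of_nonneg (hlower y x hy h), abs_of_nonneg (sub_nonneg.2 h)]
      exact hupper y x hy h
  have hsup : ∀ a b, 0 ≤ a → a ≤ b → b ≤ a + C →
      ∫ y in a..b, sSup (qv '' Icc a y) ≤ C * qc b - C * qc a := by
    intro a b ha hab hb
    exact integral_sSup_image_Icc_le_sub hab (hcont.mono fun x hx => ha.trans hx.1)
      (hbdd a b ha) fun z x hz hzx hx => hslope z x (ha.trans hz) hzx (by linarith)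
  have hqc_int : ∀ a b, 0 ≤ a → a ≤ b → ∫ y in a..b, qv y ≤ C * qc b - C * qc a := by
    intro a b ha hab
    refine integral_le_sub_of_short (f := fun x => C * qc x) hC hint ?_ ha hab
    intro a b ha hab hb
    exact (integral_le_integral_sSup_image_Icc le_rfl hab (hbdd a b ha) (hint a b ha hab)).trans
      (hsup a b ha hab hb)
  have hGint : ∀ a b, 0 ≤ a → a ≤ b →
      IntervalIntegrable (fun y => sSup (qv '' Icc 0 y)) MeasureTheory.volume a b := by
    intro a b ha hab
    apply MonotoneOn.intervalIntegrable
    rw [uIcc_of_le hab]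
    exact (monotoneOn_sSup_image_Icc (hbdd 0 b le_rfl)).mono (Icc_subset_Icc_left ha)
  have hbar : ∀ v ∈ Icc (0 : ℝ) C, C * qcbar v = ∫ y in (0 : ℝ)..v, sSup (qv '' Icc 0 y) := by
    intro v hv
    rw [hqcbar1 v hv, ← intervalIntegral.integral_const_mul]
    apply intervalIntegral.integral_congr
    intro y hy
    rw [uIcc_of_le hv.1] at hy
    simp only [hr y hy.1]
    field_simp
  intro v v' hv hvv'
  rw [mul_sub]
  rcases lt_or_ge C v with hCv | hvC
  · rw [hqcbar2 v hCv, hqcbar2 v' (hCv.trans hvv')]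
    exact hqc_int v v' hv hvv'.le
  rw [hbar v ⟨hv, hvC⟩]
  rcases lt_or_ge C v' with hCv' | hvC'
  · rw [hqcbar2 v' hCv', ← intervalIntegral.integral_add_adjacent_intervals
      (hint v C hv hvC) (hint C v' hC.le hCv'.le)]
    have h₁ := hqc_int C v' hC.le hCv'.le
    have h₂ := integral_le_integral_sSup_image_Icc hv hvC (hbdd 0 C le_rfl) (hint v C hv hvC)
    have h₃ := hsup 0 C le_rfl hC.le (by linarith)
    have h₄ := intervalIntegral.integral_add_adjacent_intervals
      (hGint 0 v le_rfl hv) (hGint v C hv hvC)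
    have h₅ := mul_nonneg hC.le (hqc 0 le_rfl).1
    linarith
  · rw [hbar v' ⟨hv.trans hvv'.le, hvC'⟩]
    have h₁ := integral_le_integral_sSup_image_Icc hv hvv'.le (hbdd 0 v' le_rfl)
      (hint v v' hv hvv'.le)
    have h₂ := intervalIntegral.integral_add_adjacent_intervals
      (hGint 0 v le_rfl hv) (hGint v v' hv hvv'.le)
    linarith
end

section
/- Let V be drawn from a distribution on [0,∞) with CDF F, density f > 0, and finite mean, and let C > 0. Let g : [0,∞) → [0,1] be nondecreasing with g(0) = 0 and convex on [0, C], and let q_c : [0,∞) → [0,1] be measurable with g(v) ≤ q_c(v) for all v ≥ 0. Then E[ ∫_0^{min(V, C)} g(z) dz ] ≤ E[ φ⁺(V)·q_c(V) ], where φ(v) = v − (1 − F(v))/f(v) and φ⁺(v) = max(φ(v), 0). -/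
open MeasureTheory Set

/-- A convex function on `[0, C]` vanishing at `0` lies below its chords from the origin, so its
integral is at most the area of the triangle below the chord. -/
lemma ConvexOn.two_mul_integral_le {C w : ℝ} {g : ℝ → ℝ} (hgconv : ConvexOn ℝ (Icc 0 C) g)
    (hg0 : g 0 = 0) (hw : 0 ≤ w) (hwC : w ≤ C) (hgi : IntervalIntegrable g volume 0 w) :
    2 * ∫ z in (0 : ℝ)..w, g z ≤ w * g w := by
  rcases hw.eq_or_lt with rfl | hw'
  · simp
  have hchord : ∫ z in (0 : ℝ)..w, g z ≤ ∫ z in (0 : ℝ)..w, z * (g w / w) := by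
    refine intervalIntegral.integral_mono_on hw hgi
      (Continuous.intervalIntegrable (by fun_prop) 0 w) fun z hz => ?_
    have hc := hgconv.2 (left_mem_Icc.2 (hw.trans hwC)) (⟨hw, hwC⟩ : w ∈ Icc 0 C)
      (sub_nonneg.2 ((div_le_one hw').2 hz.2)) (div_nonneg hz.1 hw) (sub_add_cancel 1 (z / w))
    simp only [smul_eq_mul, mul_zero, zero_add, hg0] at hc
    rw [div_mul_cancel₀ _ hw'.ne'] at hc
    exact hc.trans_eq (by ring)
  rw [intervalIntegral.integral_mul_const, integral_id] at hchord
  have : (w ^ 2 - 0 ^ 2) / 2 * (g w / w) = w * g w / 2 := by field_simp; ring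
  linarith

/-- The layer-cake exchange for a density: the tail of `f` integrated against `h` is the primitive
of `h` integrated against `f`. -/
lemma integral_mul_tail_eq_integral_primitive_mul {f h : ℝ → ℝ} (hfm : Measurable f)
    (hf0 : ∀ v, 0 ≤ v → 0 ≤ f v) (hmean : IntegrableOn (fun v => v * f v) (Ici 0))
    (hh : Monotone h) (hh01 : ∀ v, h v ∈ Icc (0 : ℝ) 1) :
    IntegrableOn (fun v => h v * ∫ t in Ioi v, f t) (Ici 0) ∧
    IntegrableOn (fun t => (∫ v in (0 : ℝ)..t, h v) * f t) (Ici 0) ∧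
      ∫ v in Ici (0 : ℝ), h v * ∫ t in Ioi v, f t =
        ∫ t in Ici (0 : ℝ), (∫ v in (0 : ℝ)..t, h v) * f t := by
  have hhi (a b : ℝ) : IntervalIntegrable h volume a b := hh.intervalIntegrable
  let K : ℝ → ℝ → ℝ := fun v t => if v < t then h v * f t else 0
  have hKm : Measurable (Function.uncurry K) :=
    Measurable.ite (measurableSet_lt measurable_fst measurable_snd)
      ((hh.measurable.comp measurable_fst).mul (hfm.comp measurable_snd)) measurable_const
  have hK_indicator (t : ℝ) : (fun v => K v t) = (Iio t).indicator fun v => h v * f t := by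
    ext v; simp [K, indicator_apply]
  have hKt (t : ℝ) (ht : 0 ≤ t) :
      ∫ v in Ici (0 : ℝ), K v t = (∫ v in (0 : ℝ)..t, h v) * f t := by
    rw [hK_indicator, setIntegral_indicator measurableSet_Iio, Ici_inter_Iio,
      integral_mul_const, intervalIntegral.integral_of_le ht, integral_Ico_eq_integral_Ioo,
      integral_Ioc_eq_integral_Ioo]
  have hKv (v : ℝ) (hv : 0 ≤ v) : ∫ t in Ici (0 : ℝ), K v t = h v * ∫ t in Ioi v, f t := by
    have hK : K v = (Ioi v).indicator fun t => h v * f t := by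
      ext t; simp [K, indicator_apply]
    rw [hK, setIntegral_indicator measurableSet_Ioi,
      inter_eq_right.2 (Ioi_subset_Ici hv), integral_const_mul]
  have hHf : IntegrableOn (fun t => (∫ v in (0 : ℝ)..t, h v) * f t) (Ici 0) := by
    have hHc : Continuous fun t => ∫ v in (0 : ℝ)..t, h v :=
      intervalIntegral.continuous_primitive hhi 0
    refine Integrable.mono' hmean (hHc.measurable.mul hfm).aestronglyMeasurable ?_
    refine (ae_restrict_iff' measurableSet_Ici).2 (.of_forall fun t (ht : 0 ≤ t) => ?_)
    have hH0 : 0 ≤ ∫ v in (0 : ℝ)..t, h v :=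
      intervalIntegral.integral_nonneg ht fun v _ => (hh01 v).1
    have hHt : ∫ v in (0 : ℝ)..t, h v ≤ t := by
      simpa using intervalIntegral.integral_mono_on ht (hhi 0 t)
        (intervalIntegrable_const (c := (1 : ℝ))) fun v _ => (hh01 v).2
    rw [Real.norm_of_nonneg (mul_nonneg hH0 (hf0 t ht))]
    exact mul_le_mul_of_nonneg_right hHt (hf0 t ht)
  have hKi : Integrable (Function.uncurry K)
      ((volume.restrict (Ici (0 : ℝ))).prod (volume.restrict (Ici 0))) := by
    refine (integrable_prod_iff' hKm.aestronglyMeasurable).2 ⟨?_, ?_⟩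
    · refine .of_forall fun t => ?_
      change Integrable (fun v => K v t) _
      rw [hK_indicator, integrable_indicator_iff measurableSet_Iio, IntegrableOn,
        Measure.restrict_restrict measurableSet_Iio, inter_comm, Ici_inter_Iio]
      refine Integrable.mul_const ?_ _
      exact (hh.monotoneOn (Icc 0 t)).integrableOn_isCompact isCompact_Icc |>.mono_set
        Ico_subset_Icc_self
    · refine hHf.congr ?_
      refine (ae_restrict_iff' measurableSet_Ici).2 (.of_forall fun t (ht : 0 ≤ t) => ?_)
      change (∫ v in (0 : ℝ)..t, h v) * f t = ∫ v in Ici (0 : ℝ), ‖K v t‖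
      rw [← hKt t ht]
      congr 1 with v
      refine (Real.norm_of_nonneg ?_).symm
      simp only [K]
      split_ifs
      exacts [mul_nonneg (hh01 v).1 (hf0 t ht), le_rfl]
  refine ⟨?_, hHf, ?_⟩
  · refine hKi.integral_prod_left.congr ?_
    exact (ae_restrict_iff' measurableSet_Ici).2 (.of_forall hKv)
  · rw [← setIntegral_congr_fun measurableSet_Ici hKv, ← setIntegral_congr_fun measurableSet_Ici hKt]
    exact integral_integral_swap hKi

open MeasureTheory Set

/-- Let `V` have CDF `F`, density `f > 0` on `[0,∞)`, and finite mean,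
and `C > 0`. If `g : [0,∞) → [0,1]` is nondecreasing with `g(0) = 0` and convex on
`[0, C]`, and `q_c : [0,∞) → [0,1]` is measurable with `g ≤ q_c`, then
`E[∫_0^{min(V,C)} g(z) dz] ≤ E[φ⁺(V)·q_c(V)]`, where `φ(v) = v − (1 − F(v))/f(v)`. -/
theorem below_capacity_part_bounded_by_virtual_surplus
    (C : ℝ) (hC : 0 < C)
    (f F : ℝ → ℝ) (hfm : Measurable f)
    (hfpos : ∀ v, 0 ≤ v → 0 < f v)
    (hprob : ∫ v in Ici (0 : ℝ), f v = 1)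
    (hF : ∀ v, F v = ∫ t in (0 : ℝ)..v, f t)
    (hmean : IntegrableOn (fun v => v * f v) (Ici 0))
    (g : ℝ → ℝ) (hg01 : ∀ v, 0 ≤ v → g v ∈ Icc (0 : ℝ) 1)
    (hgmono : MonotoneOn g (Ici 0)) (hg0 : g 0 = 0)
    (hgconv : ConvexOn ℝ (Icc 0 C) g)
    (qc : ℝ → ℝ) (hqcm : Measurable qc)
    (hqc01 : ∀ v, 0 ≤ v → qc v ∈ Icc (0 : ℝ) 1)
    (hgqc : ∀ v, 0 ≤ v → g v ≤ qc v) :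
    (∫ v in Ici (0 : ℝ), (∫ z in (0 : ℝ)..(min v C), g z) * f v) ≤
      ∫ v in Ici (0 : ℝ), max (v - (1 - F v) / f v) 0 * qc v * f v := by
  have hfi : IntegrableOn f (Ici 0) := by
    by_contra hn
    rw [integral_undef hn] at hprob
    exact zero_ne_one hprob
  have htail (v : ℝ) (hv : 0 ≤ v) : 1 - F v = ∫ t in Ioi v, f t := by
    have hsplit := setIntegral_union (Ioc_disjoint_Ioi le_rfl) measurableSet_Ioi
      (hfi.mono_set fun x (hx : x ∈ Ioc 0 v) => hx.1.le)
      (hfi.mono_set fun x (hx : v < x) => hv.trans hx.le)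
    rw [Ioc_union_Ioi_eq_Ioi hv, ← integral_Ici_eq_integral_Ioi, hprob] at hsplit
    rw [hF, intervalIntegral.integral_of_le hv]
    linarith
  have htail0 (v : ℝ) (hv : 0 ≤ v) : 0 ≤ 1 - F v := by
    rw [htail v hv]
    exact setIntegral_nonneg measurableSet_Ioi fun t ht => (hfpos t (hv.trans ht.le)).le
  let h : ℝ → ℝ := fun v => g (min (max v 0) C)
  have hproj (v : ℝ) : 0 ≤ min (max v 0) C := le_min (le_max_right _ _) hC.le
  have hh : Monotone h := fun a b hab =>
    hgmono (hproj a) (hproj b) (min_le_min_right _ (max_le_max_right _ hab))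
  have hh01 (v : ℝ) : h v ∈ Icc (0 : ℝ) 1 := hg01 _ (hproj v)
  have hhv (v : ℝ) (hv : 0 ≤ v) : h v = g (min v C) := by simp only [h, max_eq_left hv]
  have hhi (a b : ℝ) : IntervalIntegrable h volume a b := hh.intervalIntegrable
  obtain ⟨hSi, hHi, hswap⟩ := integral_mul_tail_eq_integral_primitive_mul hfm
    (fun v hv => (hfpos v hv).le) hmean hh hh01
  have hvh : IntegrableOn (fun v => v * h v * f v) (Ici 0) := by
    refine Integrable.mono' hmean
      ((measurable_id.mul hh.measurable).mul hfm).aestronglyMeasurable ?_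
    refine (ae_restrict_iff' measurableSet_Ici).2 (.of_forall fun v (hv : 0 ≤ v) => ?_)
    have hf := (hfpos v hv).le
    rw [Real.norm_of_nonneg (mul_nonneg (mul_nonneg hv (hh01 v).1) hf)]
    exact mul_le_mul_of_nonneg_right (mul_le_of_le_one_right hv (hh01 v).2) hf
  have hGH (v : ℝ) (hv : 0 ≤ v) :
      ∫ z in (0 : ℝ)..(min v C), g z ≤ v * h v - ∫ z in (0 : ℝ)..v, h z := by
    have hw : 0 ≤ min v C := le_min hv hC.le
    have hgi : IntervalIntegrable g volume 0 (min v C) :=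
      (hgmono.mono (by rw [uIcc_of_le hw]; exact Icc_subset_Ici_self)).intervalIntegrable
    have hconv := hgconv.two_mul_integral_le hg0 hw (min_le_right _ _) hgi
    have hlow : ∫ z in (0 : ℝ)..(min v C), h z = ∫ z in (0 : ℝ)..(min v C), g z := by
      refine intervalIntegral.integral_congr fun z hz => ?_
      rw [uIcc_of_le hw] at hz
      rw [hhv z hz.1, min_eq_left (hz.2.trans (min_le_right _ _))]
    have hhigh : ∫ z in (min v C)..v, h z ≤ (v - min v C) * h v := by
      simpa using intervalIntegral.integral_mono_on (min_le_left v C) (hhi _ _)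
        (intervalIntegrable_const (c := h v)) fun z hz => hh hz.2
    rw [← intervalIntegral.integral_add_adjacent_intervals (hhi 0 (min v C)) (hhi _ v), hlow]
    rw [← hhv v hv] at hconv
    linarith
  have hFc : ContinuousOn F (Ici 0) := by
    have hc : Continuous fun v => ∫ t in (0 : ℝ)..v, (Ici (0 : ℝ)).indicator f t :=
      intervalIntegral.continuous_primitive
        (fun a b => ((integrable_indicator_iff measurableSet_Ici).2 hfi).intervalIntegrable) 0
    refine hc.continuousOn.congr fun v (hv : 0 ≤ v) => ?_
    rw [hF]
    refine intervalIntegral.integral_congr fun t ht => ?_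
    rw [uIcc_of_le hv] at ht
    exact (indicator_of_mem (show t ∈ Ici 0 from ht.1) f).symm
  have hRi : IntegrableOn (fun v => max (v - (1 - F v) / f v) 0 * qc v * f v) (Ici 0) := by
    have hFm : AEMeasurable F (volume.restrict (Ici 0)) := hFc.aemeasurable measurableSet_Ici
    refine Integrable.mono' hmean (AEMeasurable.aestronglyMeasurable (by fun_prop)) ?_
    refine (ae_restrict_iff' measurableSet_Ici).2 (.of_forall fun v (hv : 0 ≤ v) => ?_)
    have hf := (hfpos v hv).le
    have hφ : max (v - (1 - F v) / f v) 0 ≤ v :=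
      max_le (sub_le_self _ (div_nonneg (htail0 v hv) hf)) hv
    have hq := hqc01 v hv
    rw [Real.norm_of_nonneg (mul_nonneg (mul_nonneg (le_max_right _ _) hq.1) hf)]
    refine mul_le_mul_of_nonneg_right ?_ hf
    exact (mul_le_of_le_one_right (le_max_right _ _) hq.2).trans hφ
  calc ∫ v in Ici (0 : ℝ), (∫ z in (0 : ℝ)..(min v C), g z) * f v
      ≤ ∫ v in Ici (0 : ℝ), (v * h v * f v - (∫ z in (0 : ℝ)..v, h z) * f v) := by
        refine integral_mono_of_nonneg ?_ (hvh.sub hHi) ?_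
        · refine (ae_restrict_iff' measurableSet_Ici).2 (.of_forall fun v (hv : 0 ≤ v) => ?_)
          exact mul_nonneg (intervalIntegral.integral_nonneg (le_min hv hC.le)
            fun z hz => (hg01 z hz.1).1) (hfpos v hv).le
        · refine (ae_restrict_iff' measurableSet_Ici).2 (.of_forall fun v (hv : 0 ≤ v) => ?_)
          have := mul_le_mul_of_nonneg_right (hGH v hv) (hfpos v hv).le
          rwa [sub_mul] at this
    _ = ∫ v in Ici (0 : ℝ), (v * h v * f v - h v * ∫ t in Ioi v, f t) := by
        rw [integral_sub hvh hHi, integral_sub hvh hSi, hswap]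
    _ ≤ ∫ v in Ici (0 : ℝ), max (v - (1 - F v) / f v) 0 * qc v * f v := by
        refine setIntegral_mono_on (hvh.sub hSi) hRi measurableSet_Ici fun v (hv : 0 ≤ v) => ?_
        have hf := hfpos v hv
        have hhq : h v ≤ qc v := by
          rw [hhv v hv]
          exact (hgmono (le_min hv hC.le) hv (min_le_left _ _)).trans (hgqc v hv)
        rw [← htail v hv]
        calc v * h v * f v - h v * (1 - F v) = (v - (1 - F v) / f v) * h v * f v := by
              field_simp
          _ ≤ max (v - (1 - F v) / f v) 0 * qc v * f v :=
              mul_le_mul_of_nonneg_right (mul_le_mul (le_max_left _ _) hhq (hh01 v).1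
                (le_max_right _ _)) hf.le
end

section
/- Fix a capacity C > 0 and let (x, p) be a one-priced mechanism (x : [0,∞) → [0,1], p : [0,∞) → ℝ, p(0) = 0, 0 ≤ p(v) ≤ v·x(v)). If (x, p) is BIC, i.e. min( v·x(v) − p(v), C·x(v) ) ≥ min( v·x(v') − p(v'), C·x(v') ) for all v, v' ≥ 0, then x is monotone nondecreasing. -/
open Set

/-- If `(x, p)` is a one-priced mechanism (with `p(0) = 0` and
`0 ≤ p(v) ≤ v·x(v)`) that is BIC for capacitated utility
`U(v,v') = min(v·x(v') − p(v'), C·x(v'))`, then `x` is monotone nondecreasing. -/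
theorem one_priced_BIC_implies_monotone
    (C : ℝ) (hC : 0 < C)
    (x p : ℝ → ℝ)
    (hx01 : ∀ v, 0 ≤ v → x v ∈ Icc (0 : ℝ) 1)
    (hp0 : p 0 = 0)
    (hpbd : ∀ v, 0 ≤ v → 0 ≤ p v ∧ p v ≤ v * x v)
    (hBIC : ∀ v, 0 ≤ v → ∀ v', 0 ≤ v' →
        min (v * x v - p v) (C * x v) ≥ min (v * x v' - p v') (C * x v')) :
    MonotoneOn x (Ici 0) := by
  intro a ha b hb hab
  by_contra! hlt
  have hlt_ab : a < b := lt_of_le_of_ne hab fun h => by simp [h] at hlt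
  have hxb := (hx01 b hb).1
  have hCx : C * x b < C * x a := mul_lt_mul_of_pos_left hlt hC
  have hdev : b * x a - p a ≤ min (b * x b - p b) (C * x b) := by
    rcases min_le_iff.mp (hBIC b hb a ha) with h | h
    · exact h
    · exact absurd (h.trans (min_le_right _ _)) hCx.not_ge
  obtain ⟨hdev_price, hdev_cap⟩ := le_min_iff.mp hdev
  have hself := (hBIC a ha b hb).le.trans (min_le_left _ _)
  rcases min_le_iff.mp hself with h | h
  · nlinarith [mul_pos (sub_pos.mpr hlt_ab) (sub_pos.mpr hlt)]
  · nlinarith [mul_pos (sub_pos.mpr hlt_ab) (hxb.trans_lt hlt)]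
end

section
/- Consider n agents with capacities C_1, …, C_n > 0 and independent values V_1, …, V_n, where V_i has CDF F_i, density f_i > 0, and finite mean. For every BIC n-agent two-priced auction, the expected revenue Σ_i E[ V_i·(q_{v,i}(V_i) + q_{c,i}(V_i)) − C_i·q_{c,i}(V_i) ] is at most 2·E[ max_i φ_i⁺(V_i) ] + E[ max_i max(V_i − C_i, 0) ], where φ_i(v) = v − (1 − F_i(v))/f_i(v) and φ_i⁺(v) = max(φ_i(v), 0). In particular the expected revenue is at most 3·max( E[max_i φ_i⁺(V_i)], E[max_i max(V_i − C_i, 0)] ). -/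
open MeasureTheory Set

/-- The interim rules `qv`, `qc` of a single agent with capacity `C` form a measurable BIC
two-priced mechanism. -/
structure IsTwoPricedBIC (C : ℝ) (qv qc : ℝ → ℝ) : Prop where
  capacity_pos : 0 < C
  measurable_v : Measurable qv
  measurable_c : Measurable qc
  nonneg_v : ∀ t, 0 ≤ qv t
  nonneg_c : ∀ t, 0 ≤ qc t
  add_le_one : ∀ t, qv t + qc t ≤ 1
  bic : ∀ v, 0 ≤ v → ∀ v', 0 ≤ v' →
    qv v * min 0 C + qc v * C ≥ qv v' * min (v - v') C + qc v' * min (v - v' + C) C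

/-- The largest value of `q` on `[0, v]`. -/
noncomputable def runningSup (q : ℝ → ℝ) (v : ℝ) : ℝ := ⨆ s : Icc (0 : ℝ) v, q s

/-- The auxiliary allocation rule: the running supremum of `qv`, scaled down below capacity. -/
noncomputable def auxRule (C : ℝ) (q : ℝ → ℝ) (v : ℝ) : ℝ := runningSup q v * (max 0 (min v C) / C)

theorem intervalIntegrable_of_measurable_of_mem_Icc {x : ℝ → ℝ} (hx : Measurable x)
    (h0 : ∀ t, 0 ≤ x t) (h1 : ∀ t, x t ≤ 1) (a b : ℝ) : IntervalIntegrable x volume a b := by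
  refine (intervalIntegrable_const (c := (1 : ℝ))).mono_fun hx.aestronglyMeasurable ?_
  refine Filter.Eventually.of_forall fun t => ?_
  simpa [abs_of_nonneg (h0 t)] using h1 t

namespace IsTwoPricedBIC

variable {C : ℝ} {qv qc : ℝ → ℝ}

theorem v_le_one (h : IsTwoPricedBIC C qv qc) (t : ℝ) : qv t ≤ 1 := by
  linarith [h.add_le_one t, h.nonneg_c t]

theorem c_le_one (h : IsTwoPricedBIC C qv qc) (t : ℝ) : qc t ≤ 1 := by
  linarith [h.add_le_one t, h.nonneg_v t]

theorem utility_add_le (h : IsTwoPricedBIC C qv qc) {v v' : ℝ} (hv' : 0 ≤ v') (hle : v' ≤ v)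
    (hC : v - v' ≤ C) :
    qc v' * C + qv v' * (v - v') ≤ qc v * C := by
  have := h.bic v (hv'.trans hle) v' hv'
  rw [min_eq_left h.capacity_pos.le, min_eq_left hC, min_eq_right (by linarith)] at this
  linarith

theorem qc_mono (h : IsTwoPricedBIC C qv qc) : MonotoneOn qc (Ici 0) := by
  intro a ha b hb hab
  have := h.bic b hb a ha
  have hC := h.capacity_pos
  rw [min_eq_left hC.le, min_eq_right (a := b - a + C) (by linarith)] at this
  have h2 : 0 ≤ qv a * min (b - a) C :=
    mul_nonneg (h.nonneg_v a) (le_min (by linarith) hC.le)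
  exact le_of_mul_le_mul_right (by linarith) hC

theorem qv_le_add (h : IsTwoPricedBIC C qv qc) {v v' : ℝ} (hv' : 0 ≤ v') (hle : v' ≤ v) :
    qv v' ≤ qv v + qc v := by
  have hC := h.capacity_pos
  rcases hle.eq_or_lt with rfl | hlt
  · linarith [h.nonneg_c v']
  rcases le_total (v - v') C with hd | hd
  · have h1 := h.utility_add_le hv' hle hd
    have h2 := h.bic v' hv' v (hv'.trans hle)
    rw [min_eq_left hC.le, min_eq_left (by linarith), min_eq_left (by linarith)] at h2
    have : (v - v') * qv v' ≤ (v - v') * (qv v + qc v) := by nlinarith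
    exact le_of_mul_le_mul_left this (by linarith)
  · have h2 := h.bic v (hv'.trans hle) v' hv'
    rw [min_eq_left hC.le, min_eq_right hd, min_eq_right (by linarith)] at h2
    have : C * qv v' ≤ C * (qv v + qc v) := by
      nlinarith [mul_nonneg hC.le (h.nonneg_v v), mul_nonneg hC.le (h.nonneg_c v')]
    exact le_of_mul_le_mul_left this hC

/-- The utility `C * qc` grows at least at rate `qv`. -/
theorem integral_qv_le (h : IsTwoPricedBIC C qv qc) {a b : ℝ} (ha : 0 ≤ a) (hab : a ≤ b) :
    ∫ s in a..b, qv s ≤ qc b * C - qc a * C := by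
  have hC := h.capacity_pos
  set u : ℝ → ℝ := fun t => qc t * C with hu
  have hmono : MonotoneOn u (Ici 0) := fun x hx y hy hxy =>
    mul_le_mul_of_nonneg_right (h.qc_mono hx hy hxy) hC.le
  have hmono' : MonotoneOn u (uIcc a b) := by
    rw [uIcc_of_le hab]
    exact hmono.mono fun x hx => ha.trans hx.1
  have hint := hmono'.intervalIntegral_deriv_mem_uIcc
  rw [uIcc_of_le (sub_nonneg.2 (hmono ha (ha.trans hab) hab))] at hint
  refine le_trans ?_ hint.2
  refine intervalIntegral.integral_mono_ae_restrict hab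
    (intervalIntegrable_of_measurable_of_mem_Icc h.measurable_v h.nonneg_v h.v_le_one a b)
    hmono'.intervalIntegrable_deriv ?_
  rw [Filter.EventuallyLE, ← restrict_Ioo_eq_restrict_Icc, ae_restrict_iff' measurableSet_Ioo]
  filter_upwards [hmono.ae_differentiableWithinAt_of_mem] with x hx hxab
  have hx0 : 0 < x := ha.trans_lt hxab.1
  have hd : HasDerivAt u (deriv u x) x :=
    ((hx hx0.le).differentiableAt (Ici_mem_nhds hx0)).hasDerivAt
  have ht := (hasDerivAt_iff_tendsto_slope.1 hd).mono_left
    (nhdsWithin_mono x (fun y hy => ne_of_gt hy : Ioi x ⊆ {x}ᶜ))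
  refine ge_of_tendsto ht ?_
  filter_upwards [Ioo_mem_nhdsGT (show x < x + C by linarith)] with y hy
  rw [slope_def_field, le_div_iff₀ (by linarith [hy.1])]
  have := h.utility_add_le hx0.le hy.1.le (by linarith [hy.2])
  simp only [hu]
  linarith

theorem bddAbove_range (h : IsTwoPricedBIC C qv qc) (v : ℝ) :
    BddAbove (range fun s : Icc (0 : ℝ) v => qv s) :=
  ⟨1, by rintro _ ⟨s, rfl⟩; exact h.v_le_one s⟩

theorem le_runningSup (h : IsTwoPricedBIC C qv qc) {s v : ℝ} (hs : 0 ≤ s) (hsv : s ≤ v) :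
    qv s ≤ runningSup qv v :=
  le_ciSup (h.bddAbove_range v) ⟨s, hs, hsv⟩

theorem runningSup_nonneg (h : IsTwoPricedBIC C qv qc) (v : ℝ) : 0 ≤ runningSup qv v :=
  Real.iSup_nonneg fun s => h.nonneg_v s

theorem runningSup_mono (h : IsTwoPricedBIC C qv qc) : Monotone (runningSup qv) := fun _ v hav =>
  Real.iSup_le (fun s => h.le_runningSup s.2.1 (s.2.2.trans hav)) (h.runningSup_nonneg v)

theorem runningSup_le_add (h : IsTwoPricedBIC C qv qc) (v : ℝ) : runningSup qv v ≤ qv v + qc v :=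
  Real.iSup_le (fun s => h.qv_le_add s.2.1 s.2.2) (add_nonneg (h.nonneg_v v) (h.nonneg_c v))

theorem measurable_auxRule (h : IsTwoPricedBIC C qv qc) : Measurable (auxRule C qv) :=
  h.runningSup_mono.measurable.mul
    ((measurable_const.max (measurable_id.min measurable_const)).div_const C)

theorem auxRule_nonneg (h : IsTwoPricedBIC C qv qc) (v : ℝ) : 0 ≤ auxRule C qv v :=
  mul_nonneg (h.runningSup_nonneg v) (div_nonneg (le_max_left _ _) h.capacity_pos.le)

theorem auxRule_le_add (h : IsTwoPricedBIC C qv qc) (v : ℝ) : auxRule C qv v ≤ qv v + qc v := by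
  refine le_trans ?_ (h.runningSup_le_add v)
  refine mul_le_of_le_one_right (h.runningSup_nonneg v) ?_
  rw [div_le_one h.capacity_pos]
  exact max_le h.capacity_pos.le (min_le_right _ _)

theorem integral_qc_le (h : IsTwoPricedBIC C qv qc) {m β : ℝ} (hm : 0 ≤ m) (hmC : m ≤ C)
    (hβ : ∀ s, 0 ≤ s → s ≤ m → qv s ≤ β) :
    ∫ s in (0 : ℝ)..m, qc s ≤ qc m * C - (∫ s in (0 : ℝ)..m, qv s) + β * m ^ 2 / (2 * C) := by
  have hC := h.capacity_pos
  have hiv := intervalIntegrable_of_measurable_of_mem_Icc h.measurable_v h.nonneg_v h.v_le_one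
  have hic := intervalIntegrable_of_measurable_of_mem_Icc h.measurable_c h.nonneg_c h.c_le_one
  set K := qc m * C - ∫ s in (0 : ℝ)..m, qv s with hK
  have hK0 : 0 ≤ K := by
    have := h.integral_qv_le le_rfl hm
    have := mul_nonneg (h.nonneg_c 0) hC.le
    linarith
  have key : ∀ s ∈ Icc 0 m, qc s ≤ K / C + β / C * s := by
    intro s hs
    have h1 := h.integral_qv_le hs.1 hs.2
    have h2 := intervalIntegral.integral_add_adjacent_intervals (hiv 0 s) (hiv s m)
    have h3 : ∫ t in (0 : ℝ)..s, qv t ≤ ∫ _ in (0 : ℝ)..s, β :=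
      intervalIntegral.integral_mono_on hs.1 (hiv 0 s) intervalIntegrable_const
        fun t ht => hβ t ht.1 (ht.2.trans hs.2)
    rw [intervalIntegral.integral_const, smul_eq_mul, sub_zero] at h3
    rw [show K / C + β / C * s = (K + s * β) / C by ring, le_div_iff₀ hC]
    linarith
  have h4 : ∫ s in (0 : ℝ)..m, qc s ≤ ∫ s in (0 : ℝ)..m, (K / C + β / C * s) :=
    intervalIntegral.integral_mono_on hm (hic 0 m)
      ((by fun_prop : Continuous fun s : ℝ => K / C + β / C * s).intervalIntegrable 0 m) key
  have h5 : ∫ s in (0 : ℝ)..m, (K / C + β / C * s) = m * K / C + β * m ^ 2 / (2 * C) := by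
    rw [intervalIntegral.integral_add intervalIntegrable_const
      ((by fun_prop : Continuous fun s : ℝ => β / C * s).intervalIntegrable 0 m),
      intervalIntegral.integral_const, intervalIntegral.integral_const_mul, integral_id]
    simp only [smul_eq_mul]
    field_simp
    ring
  have h6 : m * K / C ≤ K := by
    rw [div_le_iff₀ hC, mul_comm]
    exact mul_le_mul_of_nonneg_left hmC hK0
  linarith

theorem integral_auxRule_le (h : IsTwoPricedBIC C qv qc) {v : ℝ} (hv : 0 ≤ v) :
    runningSup qv v * min v C ^ 2 / (2 * C) ≤
      v * auxRule C qv v - ∫ s in (0 : ℝ)..v, auxRule C qv s := by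
  have hC := h.capacity_pos
  have hix := intervalIntegrable_of_measurable_of_mem_Icc h.measurable_auxRule h.auxRule_nonneg
    fun t => (h.auxRule_le_add t).trans (h.add_le_one t)
  set m := min v C with hm
  set β := runningSup qv v with hβ
  have hm0 : 0 ≤ m := le_min hv hC.le
  have hmv : m ≤ v := min_le_left _ _
  have hβ0 : 0 ≤ β := h.runningSup_nonneg v
  have hle : ∀ s t : ℝ, 0 ≤ t → s ≤ v → min s C ≤ t → auxRule C qv s ≤ β / C * t := by
    intro s t ht hsv hst
    rw [show β / C * t = β * (t / C) by ring]
    exact mul_le_mul (h.runningSup_mono hsv)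
      (div_le_div_of_nonneg_right (max_le ht hst) hC.le)
      (div_nonneg (le_max_left _ _) hC.le) hβ0
  have h1 : ∫ s in (0 : ℝ)..m, auxRule C qv s ≤ ∫ s in (0 : ℝ)..m, β / C * s :=
    intervalIntegral.integral_mono_on hm0 (hix 0 m)
      ((by fun_prop : Continuous fun s : ℝ => β / C * s).intervalIntegrable 0 m)
      fun s hs => hle s s hs.1 (hs.2.trans hmv) (min_le_left _ _)
  have h2 : ∫ s in m..v, auxRule C qv s ≤ ∫ _ in m..v, β / C * m :=
    intervalIntegral.integral_mono_on hmv (hix m v) intervalIntegrable_const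
      fun s hs => hle s m hm0 hs.2 (min_le_min_right C hs.2)
  rw [intervalIntegral.integral_const_mul, integral_id] at h1
  rw [intervalIntegral.integral_const, smul_eq_mul] at h2
  rw [← intervalIntegral.integral_add_adjacent_intervals (hix 0 m) (hix m v)]
  have h3 : auxRule C qv v = β * (m / C) := by rw [auxRule, ← hm, max_eq_right hm0]
  have h4 : v * (β * (m / C)) - β / C * ((m ^ 2 - 0 ^ 2) / 2) - (v - m) * (β / C * m) =
      β * m ^ 2 / (2 * C) := by
    field_simp
    ring
  rw [h3]
  linarith

/-- Pointwise, the revenue is at most the sum of the risk-neutral payments for the rules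
`qv + qc` and `auxRule` and of the surplus above capacity. -/
theorem revenue_le (h : IsTwoPricedBIC C qv qc) {v : ℝ} (hv : 0 ≤ v) :
    v * (qv v + qc v) - C * qc v ≤
      (v * (qv v + qc v) - ∫ s in (0 : ℝ)..v, (qv s + qc s)) +
        (v * auxRule C qv v - ∫ s in (0 : ℝ)..v, auxRule C qv s) +
          max (v - C) 0 * (qv v + qc v) := by
  have hC := h.capacity_pos
  have hiv := intervalIntegrable_of_measurable_of_mem_Icc h.measurable_v h.nonneg_v h.v_le_one
  have hic := intervalIntegrable_of_measurable_of_mem_Icc h.measurable_c h.nonneg_c h.c_le_one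
  have haux := h.integral_auxRule_le hv
  have hm0 : 0 ≤ min v C := le_min hv hC.le
  have hmv : min v C ≤ v := min_le_left _ _
  have hvm : max (v - C) 0 = v - min v C := by
    rcases le_total v C with hvC | hvC
    · rw [min_eq_left hvC, max_eq_right (by linarith), sub_self]
    · rw [min_eq_right hvC, max_eq_left (by linarith)]
  rw [hvm]
  set m := min v C with hm
  have h1 := h.integral_qc_le hm0 (min_le_right v C) (β := runningSup qv v)
    fun s hs hsm => h.le_runningSup hs (hsm.trans hmv)
  have h2 := h.integral_qv_le hm0 hmv
  have h3 : ∫ s in m..v, qc s ≤ ∫ _ in m..v, qc v :=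
    intervalIntegral.integral_mono_on hmv (hic m v) intervalIntegrable_const
      fun s hs => h.qc_mono (hm0.trans hs.1) hv hs.2
  rw [intervalIntegral.integral_const, smul_eq_mul] at h3
  rw [intervalIntegral.integral_add (hiv 0 v) (hic 0 v),
    ← intervalIntegral.integral_add_adjacent_intervals (hiv 0 m) (hiv m v),
    ← intervalIntegral.integral_add_adjacent_intervals (hic 0 m) (hic m v)]
  have h4 : 0 ≤ (v - m) * qv v := mul_nonneg (by linarith) (h.nonneg_v v)
  linarith

end IsTwoPricedBIC

theorem MeasureTheory.Integrable.mul_of_mem_Icc {α : Type*} {_ : MeasurableSpace α} {μ : Measure α}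
    {g x : α → ℝ} (hg : Integrable g μ) (hx : Measurable x) (h0 : ∀ t, 0 ≤ x t)
    (h1 : ∀ t, x t ≤ 1) : Integrable (fun t => g t * x t) μ :=
  hg.mul_bdd (c := 1) hx.aestronglyMeasurable
    (Filter.Eventually.of_forall fun t => by simpa [abs_of_nonneg (h0 t)] using h1 t)

/-- `ν` is the probability measure on `[0, ∞)` with density `f > 0` and finite mean. -/
structure IsValueLaw (f : ℝ → ℝ) (ν : Measure ℝ) : Prop where
  measurable : Measurable f
  pos : ∀ t, 0 ≤ t → 0 < f t
  eq_withDensity : ν =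
    (volume.restrict (Ici (0 : ℝ))).withDensity fun t => ENNReal.ofReal (f t)
  isProbabilityMeasure : IsProbabilityMeasure ν
  integrable_mean : IntegrableOn (fun t => t * f t) (Ici 0)

/-- The virtual value `t - (1 - F t) / f t`, with the survival function written as a tail mass. -/
noncomputable def virtualValue (f : ℝ → ℝ) (ν : Measure ℝ) (t : ℝ) : ℝ :=
  t - ν.real (Ioi t) / f t

namespace IsValueLaw

variable {f : ℝ → ℝ} {ν : Measure ℝ}

theorem ae_nonneg (h : IsValueLaw f ν) : ∀ᵐ t ∂ν, 0 ≤ t := by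
  rw [h.eq_withDensity]
  exact (withDensity_absolutelyContinuous _ _).ae_le (ae_restrict_mem measurableSet_Ici)

theorem toReal_density (h : IsValueLaw f ν) {t : ℝ} (ht : 0 ≤ t) :
    (ENNReal.ofReal (f t)).toReal = f t :=
  ENNReal.toReal_ofReal (h.pos t ht).le

theorem integrable_iff (h : IsValueLaw f ν) {g : ℝ → ℝ} :
    Integrable g ν ↔ IntegrableOn (fun t => g t * f t) (Ici 0) := by
  rw [h.eq_withDensity, integrable_withDensity_iff h.measurable.ennreal_ofReal
    (Filter.Eventually.of_forall fun _ => ENNReal.ofReal_lt_top)]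
  refine integrable_congr ?_
  filter_upwards [ae_restrict_mem measurableSet_Ici] with t ht
  rw [h.toReal_density ht]

theorem integral_eq (h : IsValueLaw f ν) (g : ℝ → ℝ) : ∫ t, g t ∂ν = ∫ t in Ici 0, g t * f t := by
  rw [h.eq_withDensity, integral_withDensity_eq_integral_toReal_smul h.measurable.ennreal_ofReal
    (Filter.Eventually.of_forall fun _ => ENNReal.ofReal_lt_top)]
  refine integral_congr_ae ?_
  filter_upwards [ae_restrict_mem measurableSet_Ici] with t ht
  rw [h.toReal_density ht, smul_eq_mul, mul_comm]

theorem integrable_id (h : IsValueLaw f ν) : Integrable (fun t : ℝ => t) ν :=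
  h.integrable_iff.2 h.integrable_mean

theorem one_sub_integral_density (h : IsValueLaw f ν) {t : ℝ} (ht : 0 ≤ t) :
    1 - ∫ s in (0 : ℝ)..t, f s = ν.real (Ioi t) := by
  have := h.isProbabilityMeasure
  have h1 : ν.real (Iic t) = ∫ s in (0 : ℝ)..t, f s := by
    have h2 := h.integral_eq ((Iic t).indicator 1)
    rw [integral_indicator_one measurableSet_Iic] at h2
    rw [h2, intervalIntegral.integral_of_le ht, ← integral_Icc_eq_integral_Ioc, ← Ici_inter_Iic,
      ← setIntegral_indicator measurableSet_Iic]
    refine integral_congr_ae (Filter.Eventually.of_forall fun s => ?_)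
    by_cases hs : s ∈ Iic t <;> simp [hs]
  rw [← h1, ← compl_Iic, probReal_compl_eq_one_sub measurableSet_Iic]

theorem measurable_tail (h : IsValueLaw f ν) : Measurable fun t => ν.real (Ioi t) := by
  have := h.isProbabilityMeasure
  have : Antitone fun t => ν.real (Ioi t) := fun a b hab =>
    measureReal_mono (Ioi_subset_Ioi hab)
  exact this.measurable

theorem measurable_virtualValue (h : IsValueLaw f ν) : Measurable (virtualValue f ν) :=
  measurable_id.sub (h.measurable_tail.div h.measurable)

theorem integrable_virtualValue_posPart (h : IsValueLaw f ν) :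
    Integrable (fun t => max (virtualValue f ν t) 0) ν := by
  refine h.integrable_id.mono' (h.measurable_virtualValue.max measurable_const).aestronglyMeasurable
    ?_
  filter_upwards [h.ae_nonneg] with t ht
  rw [Real.norm_of_nonneg (le_max_right _ _)]
  refine max_le (sub_le_self _ (div_nonneg measureReal_nonneg (h.pos t ht).le)) ht

theorem integrable_excess (h : IsValueLaw f ν) {C : ℝ} (hC : 0 < C) :
    Integrable (fun t => max (t - C) 0) ν := by
  refine h.integrable_id.mono' (by fun_prop) ?_
  filter_upwards [h.ae_nonneg] with t ht
  rw [Real.norm_of_nonneg (le_max_right _ _)]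
  exact max_le (by linarith) ht

section Allocation

variable {x : ℝ → ℝ}

theorem integrable_intervalIntegral (h : IsValueLaw f ν) (hx : Measurable x) (h0 : ∀ t, 0 ≤ x t)
    (h1 : ∀ t, x t ≤ 1) : Integrable (fun t => ∫ s in (0 : ℝ)..t, x s) ν := by
  have hi := intervalIntegrable_of_measurable_of_mem_Icc hx h0 h1
  refine h.integrable_id.mono' (intervalIntegral.continuous_primitive hi 0).aestronglyMeasurable ?_
  filter_upwards [h.ae_nonneg] with t ht
  have h2 : ∫ s in (0 : ℝ)..t, x s ≤ ∫ _ in (0 : ℝ)..t, (1 : ℝ) :=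
    intervalIntegral.integral_mono_on ht (hi 0 t) intervalIntegrable_const fun s _ => h1 s
  rw [Real.norm_of_nonneg (intervalIntegral.integral_nonneg ht fun s _ => h0 s)]
  simpa using h2

theorem integrable_tail_and_integral_tail (h : IsValueLaw f ν) (hx : Measurable x)
    (h0 : ∀ t, 0 ≤ x t) (h1 : ∀ t, x t ≤ 1) :
    Integrable (fun t => ν.real (Ioi t) / f t * x t) ν ∧
      ∫ t, ν.real (Ioi t) / f t * x t ∂ν = ∫ t, (∫ s in (0 : ℝ)..t, x s) ∂ν := by
  have := h.isProbabilityMeasure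
  set k : ℝ → ℝ → ℝ := fun t s => (Iio t).indicator x s with hk
  have hk0 : ∀ t s, 0 ≤ k t s := fun t s => indicator_nonneg (fun s _ => h0 s) s
  have hkm : Measurable (Function.uncurry k) := by
    have : Function.uncurry k = {p : ℝ × ℝ | p.2 < p.1}.indicator fun p => x p.2 := by
      ext p
      simp [hk, Function.uncurry, indicator]
    rw [this]
    exact (hx.comp measurable_snd).indicator (measurableSet_lt measurable_snd measurable_fst)
  have hk_left : ∀ t, 0 ≤ t → ∫ s in Ioi 0, k t s = ∫ s in (0 : ℝ)..t, x s := by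
    intro t ht
    rw [intervalIntegral.integral_of_le ht, integral_Ioc_eq_integral_Ioo, ← Ioi_inter_Iio,
      ← setIntegral_indicator measurableSet_Iio]
  have hk_right : ∀ s, ∫ t, k t s ∂ν = ν.real (Ioi s) * x s := by
    intro s
    have : (fun t => k t s) = (Ioi s).indicator fun _ => x s := by
      ext t
      simp [hk, indicator]
    rw [this, integral_indicator_const _ measurableSet_Ioi, smul_eq_mul]
  have hki : Integrable (Function.uncurry k) (ν.prod (volume.restrict (Ioi 0))) := by
    rw [integrable_prod_iff hkm.aestronglyMeasurable]
    constructor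
    · refine Filter.Eventually.of_forall fun t => ?_
      have hi := (intervalIntegrable_of_measurable_of_mem_Icc hx h0 h1 0 (max t 0)).1
      change Integrable ((Iio t).indicator x) (volume.restrict (Ioi 0))
      rw [integrable_indicator_iff measurableSet_Iio, IntegrableOn,
        Measure.restrict_restrict measurableSet_Iio]
      refine hi.mono_set fun s hs => ⟨hs.2, (le_of_lt hs.1).trans (le_max_left _ _)⟩
    · refine (h.integrable_intervalIntegral hx h0 h1).congr ?_
      filter_upwards [h.ae_nonneg] with t ht
      rw [← hk_left t ht]
      refine integral_congr_ae (Filter.Eventually.of_forall fun s => ?_)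
      exact (Real.norm_of_nonneg (hk0 t s)).symm
  have hcancel : ∀ᵐ t ∂volume.restrict (Ici (0 : ℝ)),
      ν.real (Ioi t) * x t = ν.real (Ioi t) / f t * x t * f t := by
    filter_upwards [ae_restrict_mem measurableSet_Ici] with t ht
    have := (h.pos t ht).ne'
    field_simp
  constructor
  · rw [h.integrable_iff, IntegrableOn, ← integrable_congr hcancel, ← restrict_Ioi_eq_restrict_Ici]
    exact hki.integral_prod_right.congr (Filter.Eventually.of_forall hk_right)
  · rw [h.integral_eq, ← integral_congr_ae hcancel, ← restrict_Ioi_eq_restrict_Ici]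
    calc ∫ s in Ioi 0, ν.real (Ioi s) * x s = ∫ s in Ioi 0, ∫ t, k t s ∂ν := by
          simp only [hk_right]
      _ = ∫ t, (∫ s in Ioi 0, k t s) ∂ν := (integral_integral_swap hki).symm
      _ = ∫ t, (∫ s in (0 : ℝ)..t, x s) ∂ν := by
          refine integral_congr_ae ?_
          filter_upwards [h.ae_nonneg] with t ht
          exact hk_left t ht

/-- The expected risk-neutral payment for an allocation rule equals its virtual surplus. -/
theorem integral_virtualValue_mul (h : IsValueLaw f ν) (hx : Measurable x) (h0 : ∀ t, 0 ≤ x t)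
    (h1 : ∀ t, x t ≤ 1) :
    Integrable (fun t => t * x t - ∫ s in (0 : ℝ)..t, x s) ν ∧
    ∫ t, (t * x t - ∫ s in (0 : ℝ)..t, x s) ∂ν = ∫ t, virtualValue f ν t * x t ∂ν := by
  obtain ⟨hi, he⟩ := h.integrable_tail_and_integral_tail hx h0 h1
  have hid := h.integrable_id.mul_of_mem_Icc hx h0 h1
  have hprim := h.integrable_intervalIntegral hx h0 h1
  refine ⟨hid.sub hprim, ?_⟩
  simp only [virtualValue, sub_mul]
  rw [integral_sub hid hprim, integral_sub hid hi, he]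

theorem integral_virtualValue_mul_le (h : IsValueLaw f ν) (hx : Measurable x) (h0 : ∀ t, 0 ≤ x t)
    (h1 : ∀ t, x t ≤ 1) {q : ℝ → ℝ} (hq : Measurable q) (hxq : ∀ t, x t ≤ q t)
    (hq1 : ∀ t, q t ≤ 1) :
    ∫ t, (t * x t - ∫ s in (0 : ℝ)..t, x s) ∂ν ≤ ∫ t, max (virtualValue f ν t) 0 * q t ∂ν := by
  obtain ⟨hi, -⟩ := h.integrable_tail_and_integral_tail hx h0 h1
  rw [(h.integral_virtualValue_mul hx h0 h1).2]
  refine integral_mono ?_ (h.integrable_virtualValue_posPart.mul_of_mem_Icc hq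
    (fun t => (h0 t).trans (hxq t)) hq1) fun t => ?_
  · simp only [virtualValue, sub_mul]
    exact (h.integrable_id.mul_of_mem_Icc hx h0 h1).sub hi
  · exact mul_le_mul (le_max_left _ _) (hxq t) (h0 t) (le_max_right _ _)

end Allocation

theorem revenue_le (h : IsValueLaw f ν) {C : ℝ} {qv qc : ℝ → ℝ} (hq : IsTwoPricedBIC C qv qc) :
    ∫ t, (t * (qv t + qc t) - C * qc t) ∂ν ≤
      2 * (∫ t, max (virtualValue f ν t) 0 * (qv t + qc t) ∂ν) +
        ∫ t, max (t - C) 0 * (qv t + qc t) ∂ν := by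
  have := h.isProbabilityMeasure
  have hqm : Measurable fun t => qv t + qc t := hq.measurable_v.add hq.measurable_c
  have hq0 : ∀ t, 0 ≤ qv t + qc t := fun t => add_nonneg (hq.nonneg_v t) (hq.nonneg_c t)
  have ha1 : ∀ t, auxRule C qv t ≤ 1 := fun t => (hq.auxRule_le_add t).trans (hq.add_le_one t)
  have hi1 := (h.integral_virtualValue_mul hqm hq0 hq.add_le_one).1
  have hi2 := (h.integral_virtualValue_mul hq.measurable_auxRule hq.auxRule_nonneg ha1).1
  have hi3 := (h.integrable_excess hq.capacity_pos).mul_of_mem_Icc hqm hq0 hq.add_le_one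
  have hl1 := h.integral_virtualValue_mul_le hqm hq0 hq.add_le_one hqm (fun t => le_rfl)
    hq.add_le_one
  have hl2 := h.integral_virtualValue_mul_le hq.measurable_auxRule hq.auxRule_nonneg ha1 hqm
    hq.auxRule_le_add hq.add_le_one
  have hi4 : Integrable (fun t => t * (qv t + qc t) - C * qc t) ν :=
    (h.integrable_id.mul_of_mem_Icc hqm hq0 hq.add_le_one).sub
      ((integrable_const C).mul_of_mem_Icc hq.measurable_c hq.nonneg_c hq.c_le_one)
  have hle := integral_mono_ae hi4 ((hi1.add hi2).add hi3)
    (by filter_upwards [h.ae_nonneg] with t ht using hq.revenue_le ht)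
  rw [integral_add' (hi1.add hi2) hi3, integral_add' hi1 hi2] at hle
  linarith

end IsValueLaw

/-- Resampling one coordinate of a product probability measure preserves it. -/
theorem measurePreserving_update_pi {ι : Type*} [Fintype ι] [DecidableEq ι] {ν : ι → Measure ℝ}
    [∀ i, IsProbabilityMeasure (ν i)] (i : ι) :
    MeasurePreserving (fun p : ℝ × (ι → ℝ) => Function.update p.2 i p.1)
      ((ν i).prod (Measure.pi ν)) (Measure.pi ν) := by
  have hm : Measurable fun p : ℝ × (ι → ℝ) => Function.update p.2 i p.1 :=
    measurable_update'.comp measurable_swap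
  refine ⟨hm, (Measure.pi_eq fun s hs => ?_).symm⟩
  rw [Measure.map_apply hm (MeasurableSet.univ_pi hs)]
  have : (fun p : ℝ × (ι → ℝ) => Function.update p.2 i p.1) ⁻¹' univ.pi s =
      s i ×ˢ univ.pi (Function.update s i univ) := by
    ext p
    simp only [mem_preimage, mem_pi, mem_univ, true_implies, mem_prod]
    constructor
    · intro hp
      refine ⟨by simpa using hp i, fun j => ?_⟩
      rcases eq_or_ne j i with rfl | hj
      · simp
      · simpa [hj] using hp j
    · rintro ⟨hi, hp⟩ j
      rcases eq_or_ne j i with rfl | hj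
      · simpa using hi
      · simpa [hj] using hp j
  rw [this, Measure.prod_prod, Measure.pi_pi, ← Finset.mul_prod_erase _ _ (Finset.mem_univ i),
    ← Finset.mul_prod_erase Finset.univ (fun j => ν j (s j)) (Finset.mem_univ i)]
  simp only [Function.update_self, measure_univ, one_mul]
  congr 1
  refine Finset.prod_congr rfl fun j hj => ?_
  rw [Function.update_of_ne (Finset.ne_of_mem_erase hj)]

section Aggregate

variable {ι : Type*} [Fintype ι] {ν : ι → Measure ℝ}
  [∀ i, IsProbabilityMeasure (ν i)]

theorem integrable_eval_mul {i : ι} {g : ℝ → ℝ} (hg : Integrable g (ν i)) {P : (ι → ℝ) → ℝ}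
    (hP : Measurable P) (h0 : ∀ w, 0 ≤ P w) (h1 : ∀ w, P w ≤ 1) :
    Integrable (fun w : ι → ℝ => g (w i) * P w) (Measure.pi ν) := by
  have hgi : Integrable (fun w : ι → ℝ => g (w i)) (Measure.pi ν) :=
    (measurePreserving_eval ν i).integrable_comp_of_integrable hg
  exact hgi.mul_of_mem_Icc hP h0 h1

theorem integral_mul_interim [DecidableEq ι] {i : ι} {g : ℝ → ℝ} (hg : Integrable g (ν i))
    {P : (ι → ℝ) → ℝ}
    (hP : Measurable P) (h0 : ∀ w, 0 ≤ P w) (h1 : ∀ w, P w ≤ 1) :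
    ∫ t, g t * (∫ w, P (Function.update w i t) ∂Measure.pi ν) ∂ν i =
      ∫ w, g (w i) * P w ∂Measure.pi ν := by
  have hmp := measurePreserving_update_pi (ν := ν) i
  have hint := integrable_eval_mul hg hP h0 h1
  have h2 : Integrable (fun p : ℝ × (ι → ℝ) => g p.1 * P (Function.update p.2 i p.1))
      ((ν i).prod (Measure.pi ν)) := by
    simpa [Function.comp_def] using hmp.integrable_comp_of_integrable hint
  rw [← hmp.map_eq, integral_map hmp.measurable.aemeasurable
    (by rw [hmp.map_eq]; exact hint.aestronglyMeasurable)]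
  simp only [Function.update_self]
  rw [integral_prod _ h2]
  simp only [integral_const_mul]
  rw [hmp.map_eq]

theorem integrable_iSup_eval {g : ι → ℝ → ℝ} (hg : ∀ i, Integrable (g i) (ν i))
    (hgm : ∀ i, Measurable (g i)) (hg0 : ∀ i t, 0 ≤ g i t) :
    Integrable (fun w : ι → ℝ => ⨆ i, g i (w i)) (Measure.pi ν) := by
  have hsum : Integrable (fun w : ι → ℝ => ∑ i, g i (w i)) (Measure.pi ν) :=
    integrable_finsetSum _ fun i _ =>
      (measurePreserving_eval ν i).integrable_comp_of_integrable (hg i)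
  refine hsum.mono' (Measurable.iSup fun i =>
    (hgm i).comp (measurable_pi_apply i)).aestronglyMeasurable
    (Filter.Eventually.of_forall fun w => ?_)
  rw [Real.norm_of_nonneg (Real.iSup_nonneg fun i => hg0 i (w i))]
  exact Real.iSup_le (fun i => Finset.single_le_sum (f := fun i => g i (w i))
    (fun j _ => hg0 j (w j)) (Finset.mem_univ i)) (Finset.sum_nonneg fun j _ => hg0 j (w j))

/-- The total surplus of a feasible allocation is at most the expected maximum. -/
theorem sum_integral_mul_interim_le [DecidableEq ι] {g : ι → ℝ → ℝ}
    (hg : ∀ i, Integrable (g i) (ν i))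
    (hgm : ∀ i, Measurable (g i)) (hg0 : ∀ i t, 0 ≤ g i t) {P : ι → (ι → ℝ) → ℝ}
    (hP : ∀ i, Measurable (P i)) (h0 : ∀ i w, 0 ≤ P i w) (hfeas : ∀ w, ∑ i, P i w ≤ 1) :
    ∑ i, ∫ t, g i t * (∫ w, P i (Function.update w i t) ∂Measure.pi ν) ∂ν i ≤
      ∫ w, (⨆ i, g i (w i)) ∂Measure.pi ν := by
  have h1 : ∀ i w, P i w ≤ 1 := fun i w =>
    (Finset.single_le_sum (f := fun i => P i w) (fun j _ => h0 j w) (Finset.mem_univ i)).trans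
      (hfeas w)
  have hint := fun i => integrable_eval_mul (hg i) (hP i) (h0 i) (h1 i)
  simp only [fun i => integral_mul_interim (hg i) (hP i) (h0 i) (h1 i)]
  rw [← integral_finsetSum _ fun i _ => hint i]
  refine integral_mono (integrable_finsetSum _ fun i _ => hint i)
    (integrable_iSup_eval hg hgm hg0) fun w => ?_
  calc ∑ i, g i (w i) * P i w ≤ ∑ i, (⨆ j, g j (w j)) * P i w :=
        Finset.sum_le_sum fun i _ => mul_le_mul_of_nonneg_right
          (le_ciSup (f := fun j => g j (w j)) (finite_range _).bddAbove i) (h0 i w)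
    _ = (⨆ j, g j (w j)) * ∑ i, P i w := (Finset.mul_sum _ _ _).symm
    _ ≤ ⨆ j, g j (w j) :=
        mul_le_of_le_one_right (Real.iSup_nonneg fun i => hg0 i (w i)) (hfeas w)

theorem measurable_interim [DecidableEq ι] {P : (ι → ℝ) → ℝ} (hP : Measurable P) (i : ι) :
    Measurable fun t => ∫ w, P (Function.update w i t) ∂Measure.pi ν := by
  have : Measurable fun p : ℝ × (ι → ℝ) => P (Function.update p.2 i p.1) :=
    hP.comp (measurable_update'.comp measurable_swap)
  exact this.stronglyMeasurable.integral_prod_right'.measurable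

theorem integrable_interim [DecidableEq ι] {P : (ι → ℝ) → ℝ} (hP : Measurable P) (h0 : ∀ w, 0 ≤ P w)
    (h1 : ∀ w, P w ≤ 1) (i : ι) (t : ℝ) :
    Integrable (fun w => P (Function.update w i t)) (Measure.pi ν) :=
  (integrable_const (1 : ℝ)).mono' (hP.comp measurable_update_left).aestronglyMeasurable
    (Filter.Eventually.of_forall fun w => by simpa [abs_of_nonneg (h0 _)] using h1 _)

end Aggregate

/-- For `n` agents with capacities `C_i > 0` and independent values
`V_i` with CDF `F_i`, density `f_i > 0`, and finite mean, every BIC `n`-agent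
two-priced auction has expected revenue at most
`2·E[max_i φ_i⁺(V_i)] + E[max_i (V_i − C_i)⁺]`, and in particular at most
`3·max(E[max_i φ_i⁺(V_i)], E[max_i (V_i − C_i)⁺])`. -/
theorem three_approx_by_simple_benchmarks
    (n : ℕ) (C : Fin n → ℝ) (hC : ∀ i, 0 < C i)
    (f F : Fin n → ℝ → ℝ)
    (hfm : ∀ i, Measurable (f i))
    (hfpos : ∀ i t, 0 ≤ t → 0 < f i t)
    (hF : ∀ i t, F i t = ∫ s in (0 : ℝ)..t, f i s)
    (ν : Fin n → Measure ℝ)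
    (hν : ∀ i, ν i =
      (volume.restrict (Ici (0 : ℝ))).withDensity fun t => ENNReal.ofReal (f i t))
    (hprob : ∀ i, IsProbabilityMeasure (ν i))
    (hmean : ∀ i, IntegrableOn (fun t => t * f i t) (Ici 0))
    (μ : Measure (Fin n → ℝ)) (hμ : μ = Measure.pi ν)
    (Pv Pc : Fin n → (Fin n → ℝ) → ℝ)
    (hPvm : ∀ i, Measurable (Pv i)) (hPcm : ∀ i, Measurable (Pc i))
    (hPv01 : ∀ i w, Pv i w ∈ Icc (0 : ℝ) 1)
    (hPc01 : ∀ i w, Pc i w ∈ Icc (0 : ℝ) 1)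
    (hfeas : ∀ w, (∑ i, (Pv i w + Pc i w)) ≤ 1)
    (qv qc : Fin n → ℝ → ℝ)
    (hqv : ∀ i t, qv i t = ∫ w, Pv i (Function.update w i t) ∂μ)
    (hqc : ∀ i t, qc i t = ∫ w, Pc i (Function.update w i t) ∂μ)
    (hBIC : ∀ i, ∀ v, 0 ≤ v → ∀ v', 0 ≤ v' →
      qv i v * min 0 (C i) + qc i v * C i ≥
        qv i v' * min (v - v') (C i) + qc i v' * min (v - v' + C i) (C i))
    (φ : Fin n → ℝ → ℝ)
    (hφ : ∀ i v, φ i v = v - (1 - F i v) / f i v) :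
    (∑ i, ∫ t, (t * (qv i t + qc i t) - C i * qc i t) ∂(ν i)) ≤
        2 * (∫ w, (⨆ i, max (φ i (w i)) 0) ∂μ) +
          (∫ w, (⨆ i, max (w i - C i) 0) ∂μ) ∧
      (∑ i, ∫ t, (t * (qv i t + qc i t) - C i * qc i t) ∂(ν i)) ≤
        3 * max (∫ w, (⨆ i, max (φ i (w i)) 0) ∂μ)
          (∫ w, (⨆ i, max (w i - C i) 0) ∂μ) := by
  subst hμ
  have hlaw : ∀ i, IsValueLaw (f i) (ν i) := fun i =>
    ⟨hfm i, hfpos i, hν i, hprob i, hmean i⟩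
  set P : Fin n → (Fin n → ℝ) → ℝ := fun i w => Pv i w + Pc i w with hP
  have hP0 : ∀ i w, 0 ≤ P i w := fun i w => add_nonneg (hPv01 i w).1 (hPc01 i w).1
  have hPm : ∀ i, Measurable (P i) := fun i => (hPvm i).add (hPcm i)
  have hP1 : ∀ i w, P i w ≤ 1 := fun i w =>
    (Finset.single_le_sum (f := fun i => P i w) (fun j _ => hP0 j w) (Finset.mem_univ i)).trans
      (hfeas w)
  have hvint := fun i => integrable_interim (ν := ν) (hPvm i) (fun w => (hPv01 i w).1)
    (fun w => (hPv01 i w).2) i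
  have hcint := fun i => integrable_interim (ν := ν) (hPcm i) (fun w => (hPc01 i w).1)
    (fun w => (hPc01 i w).2) i
  have hadd : ∀ i t, qv i t + qc i t = ∫ w, P i (Function.update w i t) ∂Measure.pi ν := by
    intro i t
    rw [hqv, hqc, ← integral_add (hvint i t) (hcint i t)]
  have hrule : ∀ i, IsTwoPricedBIC (C i) (qv i) (qc i) := fun i =>
    { capacity_pos := hC i
      measurable_v := by
        rw [funext (hqv i)]
        exact measurable_interim (hPvm i) i
      measurable_c := by
        rw [funext (hqc i)]
        exact measurable_interim (hPcm i) i
      nonneg_v := fun t => by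
        rw [hqv]
        exact integral_nonneg fun w => (hPv01 i _).1
      nonneg_c := fun t => by
        rw [hqc]
        exact integral_nonneg fun w => (hPc01 i _).1
      add_le_one := fun t => by
        rw [hadd]
        have := integral_mono (integrable_interim (ν := ν) (hPm i) (hP0 i) (hP1 i) i t)
          (integrable_const (1 : ℝ)) fun w => hP1 i _
        simpa using this
      bic := hBIC i }
  have hφ_ae : ∀ᵐ w ∂Measure.pi ν,
      (⨆ i, max (φ i (w i)) 0) = ⨆ i, max (virtualValue (f i) (ν i) (w i)) 0 := by
    have hnn : ∀ᵐ w ∂Measure.pi ν, ∀ i, 0 ≤ w i := ae_all_iff.2 fun i =>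
      (measurePreserving_eval ν i).quasiMeasurePreserving.ae (hlaw i).ae_nonneg
    filter_upwards [hnn] with w hw
    refine iSup_congr fun i => ?_
    rw [hφ, hF, (hlaw i).one_sub_integral_density (hw i), virtualValue]
  have hvirtual := sum_integral_mul_interim_le (ν := ν)
    (g := fun i t => max (virtualValue (f i) (ν i) t) 0)
    (fun i => (hlaw i).integrable_virtualValue_posPart)
    (fun i => (hlaw i).measurable_virtualValue.max measurable_const)
    (fun i t => le_max_right _ _) hPm hP0 hfeas
  have hexcess := sum_integral_mul_interim_le (ν := ν)
    (g := fun i t => max (t - C i) 0)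
    (fun i => (hlaw i).integrable_excess (hC i)) (fun i => by fun_prop)
    (fun i t => le_max_right _ _) hPm hP0 hfeas
  simp only [← hadd] at hvirtual hexcess
  rw [integral_congr_ae hφ_ae]
  have hrev := Finset.sum_le_sum fun i (_ : i ∈ Finset.univ) => (hlaw i).revenue_le (hrule i)
  rw [Finset.sum_add_distrib, ← Finset.mul_sum] at hrev
  have hmain := hrev.trans (add_le_add (mul_le_mul_of_nonneg_left hvirtual zero_le_two) hexcess)
  refine ⟨hmain, hmain.trans ?_⟩
  set a := ∫ w, (⨆ i, max (virtualValue (f i) (ν i) (w i)) 0) ∂Measure.pi ν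
  set b := ∫ w, (⨆ i, max (w i - C i) 0) ∂Measure.pi ν
  linarith [le_max_left a b, le_max_right a b]
end

section
/- (Bulow–Klemperer) Let F be a regular distribution on [0,∞) with continuous CDF F, density f > 0, and finite mean (regular means φ(v) = v − (1 − F(v))/f(v) is nondecreasing), and let n ≥ 1. If V_1, …, V_{n+1} are i.i.d. draws from F, then the expected second-highest value among V_1, …, V_{n+1} is at least E[ max_{1 ≤ i ≤ n} φ⁺(V_i) ], where φ⁺(v) = max(φ(v), 0); that is, the expected revenue of the second-price auction with n + 1 bidders is at least the optimal (Myerson) expected revenue with n bidders. -/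
open MeasureTheory Set

/-- I.i.d. draws from an atomless distribution almost surely have no ties. -/
theorem ae_injective_pi {n : ℕ} (ν : Measure ℝ) [IsProbabilityMeasure ν] [NullSingletonClass ν] :
    ∀ᵐ w ∂(Measure.pi fun _ : Fin (n + 1) => ν), Function.Injective w := by
  have key : ∀ i : Fin (n + 1), ∀ᵐ w ∂(Measure.pi fun _ : Fin (n + 1) => ν),
      ∀ j : Fin n, w (i.succAbove j) ≠ w i := by
    intro i
    have hp : ∀ᵐ z ∂(ν.prod (Measure.pi fun _ : Fin n => ν)), ∀ j : Fin n, z.2 j ≠ z.1 := by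
      rw [Measure.ae_prod_iff_ae_ae]
      · refine ae_of_all _ fun x => ae_all_iff.2 fun j => ?_
        exact (Measure.tendsto_eval_ae_ae (μ := fun _ : Fin n => ν) (i := j)).eventually
          (ν.ae_ne x)
      · simp only [ofPred_forall]
        exact MeasurableSet.iInter fun j =>
          (measurableSet_eq_fun (by fun_prop) (by fun_prop)).compl
    exact (measurePreserving_piFinSuccAbove (fun _ => ν) i).quasiMeasurePreserving.ae hp
  filter_upwards [ae_all_iff.2 key] with w hw i j hij
  by_contra hne
  obtain ⟨k, rfl⟩ := Fin.exists_succAbove_eq (Ne.symm hne)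
  exact hw i k hij.symm

/-- The second-highest entry is the maximum of the entries other than a highest one. -/
theorem sSup_min_pairs_eq {n : ℕ} [NeZero n] {w : Fin (n + 1) → ℝ} {i₀ : Fin (n + 1)}
    (h : ∀ j, w j ≤ w i₀) :
    sSup {y | ∃ i j : Fin (n + 1), i ≠ j ∧ y = min (w i) (w j)} =
      ⨆ j : Fin n, w (i₀.succAbove j) := by
  have hle : ∀ i, i ≠ i₀ → w i ≤ ⨆ j : Fin n, w (i₀.succAbove j) := by
    intro i hi
    obtain ⟨k, rfl⟩ := Fin.exists_succAbove_eq hi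
    exact le_ciSup (f := fun j => w (i₀.succAbove j)) (Finite.bddAbove_range _) k
  have hub : ∀ y ∈ {y | ∃ i j : Fin (n + 1), i ≠ j ∧ y = min (w i) (w j)},
      y ≤ ⨆ j : Fin n, w (i₀.succAbove j) := by
    rintro y ⟨i, j, hij, rfl⟩
    by_cases hi : i = i₀
    · exact (min_le_right _ _).trans (hle j fun hj => hij (hi.trans hj.symm))
    · exact (min_le_left _ _).trans (hle i hi)
  have hmem : ∀ k : Fin n, w (i₀.succAbove k) ∈
      {y | ∃ i j : Fin (n + 1), i ≠ j ∧ y = min (w i) (w j)} := fun k =>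
    ⟨_, i₀, Fin.succAbove_ne _ _, (min_eq_left (h _)).symm⟩
  exact le_antisymm (csSup_le ⟨_, hmem 0⟩ hub) (ciSup_le fun k => le_csSup ⟨_, hub⟩ (hmem k))

/-- Summing over strict winners picks out the term of the unique maximizer. -/
theorem sum_ite_iSup_lt_eq {n : ℕ} [NeZero n] {w : Fin (n + 1) → ℝ} (hw : Function.Injective w)
    {i₀ : Fin (n + 1)} (h : ∀ j, w j ≤ w i₀) (A : Fin (n + 1) → ℝ) :
    ∑ i, (if ⨆ j : Fin n, w (i.succAbove j) < w i then A i else 0) = A i₀ := by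
  rw [Finset.sum_eq_single i₀]
  · rw [if_pos]
    obtain ⟨j, hj⟩ := exists_eq_ciSup_of_finite (f := fun j : Fin n => w (i₀.succAbove j))
    rw [← hj]
    exact lt_of_le_of_ne (h _) (hw.ne (Fin.succAbove_ne _ _))
  · intro i _ hi
    rw [if_neg]
    obtain ⟨k, rfl⟩ := Fin.exists_succAbove_eq hi.symm
    exact not_lt.2 ((h i).trans
      (le_ciSup (f := fun j => w (i.succAbove j)) (Finite.bddAbove_range _) k))
  · simp

theorem integrable_iSup_comp_eval {n : ℕ} [NeZero n] {ν : Measure ℝ} [IsProbabilityMeasure ν]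
    {g : ℝ → ℝ} (hgm : Measurable g) (hg : Integrable g ν) :
    Integrable (fun w : Fin n → ℝ => ⨆ i, g (w i)) (Measure.pi fun _ => ν) := by
  have hsum : Integrable (fun w : Fin n → ℝ => ∑ i, |g (w i)|) (Measure.pi fun _ => ν) :=
    integrable_finsetSum _ fun i _ => (integrable_comp_eval (μ := fun _ => ν) (i := i) hg).abs
  refine hsum.mono' (Measurable.iSup fun i => by fun_prop).aestronglyMeasurable
    (ae_of_all _ fun w => ?_)
  obtain ⟨j, hj⟩ := exists_eq_ciSup_of_finite (f := fun i => g (w i))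
  rw [← hj]
  exact Finset.single_le_sum (f := fun i => |g (w i)|) (fun _ _ => abs_nonneg _)
    (Finset.mem_univ j)

section
variable {n : ℕ} [NeZero n] {ν : Measure ℝ} [IsProbabilityMeasure ν] {φ : ℝ → ℝ}

/-- Revenue equivalence for a single bidder: the expected virtual value on the event of winning
equals the expected highest competing value on that event. -/
theorem integral_winner_payment (hφm : Measurable φ) (hφ : Integrable φ ν)
    (hid : Integrable (fun x => x) ν) (hpos : ∀ᵐ x ∂ν, 0 ≤ x)
    (hmy : ∀ m, 0 ≤ m → ∫ x in Ioi m, φ x ∂ν = ν.real (Ioi m) * m) (i : Fin (n + 1)) :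
    Integrable (fun w : Fin (n + 1) → ℝ =>
        if ⨆ j : Fin n, w (i.succAbove j) < w i then φ (w i) else 0)
        (Measure.pi fun _ => ν) ∧
      Integrable (fun w : Fin (n + 1) → ℝ =>
        if ⨆ j : Fin n, w (i.succAbove j) < w i then ⨆ j : Fin n, w (i.succAbove j) else 0)
        (Measure.pi fun _ => ν) ∧
      ∫ w : Fin (n + 1) → ℝ, (if ⨆ j : Fin n, w (i.succAbove j) < w i then φ (w i) else 0)
          ∂(Measure.pi fun _ => ν) =
        ∫ w : Fin (n + 1) → ℝ, (if ⨆ j : Fin n, w (i.succAbove j) < w i then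
          ⨆ j : Fin n, w (i.succAbove j) else 0) ∂(Measure.pi fun _ => ν) := by
  have hmp := measurePreserving_piFinSuccAbove (fun _ : Fin (n + 1) => ν) i
  have hMm : Measurable fun v : Fin n → ℝ => ⨆ j, v j := Measurable.iSup fun j => by fun_prop
  have hset : MeasurableSet {z : ℝ × (Fin n → ℝ) | ⨆ j, z.2 j < z.1} :=
    measurableSet_lt (hMm.comp measurable_snd) measurable_fst
  have hφ' : Integrable (fun z : ℝ × (Fin n → ℝ) => if ⨆ j, z.2 j < z.1 then φ z.1 else 0)
      (ν.prod (Measure.pi fun _ => ν)) := by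
    refine (hφ.comp_fst (Measure.pi fun _ : Fin n => ν)).mono
      (Measurable.ite hset (by fun_prop) measurable_const).aestronglyMeasurable
      (ae_of_all _ fun z => ?_)
    show ‖(if _ then _ else _ : ℝ)‖ ≤ _
    split_ifs <;> simp
  have hM' : Integrable (fun z : ℝ × (Fin n → ℝ) =>
      if ⨆ j, z.2 j < z.1 then ⨆ j, z.2 j else 0) (ν.prod (Measure.pi fun _ => ν)) := by
    refine ((integrable_iSup_comp_eval (n := n) measurable_id hid).comp_snd ν).mono
      (Measurable.ite hset (hMm.comp measurable_snd) measurable_const).aestronglyMeasurable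
      (ae_of_all _ fun z => ?_)
    show ‖(if _ then _ else _ : ℝ)‖ ≤ _
    split_ifs <;> simp
  refine ⟨hmp.integrable_comp_of_integrable hφ', hmp.integrable_comp_of_integrable hM', ?_⟩
  refine (hmp.integral_comp' (fun z : ℝ × (Fin n → ℝ) =>
    if ⨆ j, z.2 j < z.1 then φ z.1 else 0)).trans (Eq.trans ?_ (hmp.integral_comp'
    (fun z : ℝ × (Fin n → ℝ) => if ⨆ j, z.2 j < z.1 then ⨆ j, z.2 j else 0)).symm)
  rw [integral_prod_symm _ hφ', integral_prod_symm _ hM']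
  refine integral_congr_ae ?_
  have hnn : ∀ᵐ v ∂(Measure.pi fun _ : Fin n => ν), ∀ j, 0 ≤ v j :=
    ae_all_iff.2 fun j => Measure.tendsto_eval_ae_ae.eventually hpos
  filter_upwards [hnn] with v hv
  have h1 := hmy (⨆ j, v j) (Real.iSup_nonneg hv)
  rw [← integral_indicator measurableSet_Ioi] at h1
  have h2 : ∫ x in Ioi (⨆ j, v j), (⨆ j, v j) ∂ν = ν.real (Ioi (⨆ j, v j)) * ⨆ j, v j := by
    simp
  rw [← integral_indicator measurableSet_Ioi] at h2
  exact h1.trans h2.symm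

/-- The expected second-highest value is the expected maximal virtual value. -/
theorem integral_secondHighest_eq [NullSingletonClass ν] (hφm : Measurable φ) (hφ : Integrable φ ν)
    (hmono : MonotoneOn φ (Ici 0))
    (hid : Integrable (fun x => x) ν) (hpos : ∀ᵐ x ∂ν, 0 ≤ x)
    (hmy : ∀ m, 0 ≤ m → ∫ x in Ioi m, φ x ∂ν = ν.real (Ioi m) * m) :
    ∫ w : Fin (n + 1) → ℝ, sSup {y | ∃ i j : Fin (n + 1), i ≠ j ∧ y = min (w i) (w j)}
        ∂(Measure.pi fun _ => ν) =
      ∫ w : Fin (n + 1) → ℝ, (⨆ i, φ (w i)) ∂(Measure.pi fun _ => ν) := by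
  have hnn : ∀ᵐ v ∂(Measure.pi fun _ : Fin (n + 1) => ν), ∀ j, 0 ≤ v j :=
    ae_all_iff.2 fun j => Measure.tendsto_eval_ae_ae.eventually hpos
  have hW := integral_winner_payment (n := n) hφm hφ hid hpos hmy
  calc
    _ = ∫ w : Fin (n + 1) → ℝ, ∑ i, (if ⨆ j : Fin n, w (i.succAbove j) < w i then
          ⨆ j : Fin n, w (i.succAbove j) else 0) ∂(Measure.pi fun _ => ν) := by
      refine integral_congr_ae ?_
      filter_upwards [ae_injective_pi ν] with w hw
      obtain ⟨i₀, hi₀⟩ := Finite.exists_max w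
      rw [sum_ite_iSup_lt_eq hw hi₀ fun i => ⨆ j : Fin n, w (i.succAbove j),
        sSup_min_pairs_eq hi₀]
    _ = ∫ w : Fin (n + 1) → ℝ, ∑ i, (if ⨆ j : Fin n, w (i.succAbove j) < w i then
          φ (w i) else 0) ∂(Measure.pi fun _ => ν) := by
      rw [integral_finsetSum _ fun i _ => (hW i).2.1, integral_finsetSum _ fun i _ => (hW i).1]
      exact Finset.sum_congr rfl fun i _ => (hW i).2.2.symm
    _ = _ := by
      refine integral_congr_ae ?_
      filter_upwards [ae_injective_pi ν, hnn] with w hw hw0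
      obtain ⟨i₀, hi₀⟩ := Finite.exists_max w
      rw [sum_ite_iSup_lt_eq hw hi₀ fun i => φ (w i)]
      exact le_antisymm (le_ciSup (f := fun i => φ (w i)) (Finite.bddAbove_range _) i₀)
        (ciSup_le fun i => hmono (hw0 i) (hw0 i₀) (hi₀ i))

/-- An additional draw with nonnegative mean virtual value is at least as good as the outside
option `0`. -/
theorem integral_iSup_posPart_le (hφm : Measurable φ) (hφ : Integrable φ ν)
    (hzero : 0 ≤ ∫ x, φ x ∂ν) :
    ∫ w : Fin n → ℝ, (⨆ i, max (φ (w i)) 0) ∂(Measure.pi fun _ => ν) ≤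
      ∫ w : Fin (n + 1) → ℝ, (⨆ i, φ (w i)) ∂(Measure.pi fun _ => ν) := by
  have hmp := (measurePreserving_piFinSuccAbove (fun _ : Fin (n + 1) => ν) 0).symm
  have hint : Integrable (fun z => ⨆ k, φ
      ((MeasurableEquiv.piFinSuccAbove (fun _ : Fin (n + 1) => ℝ) 0).symm z k))
      (ν.prod (Measure.pi fun _ => ν)) :=
    hmp.integrable_comp_of_integrable (integrable_iSup_comp_eval (n := n + 1) hφm hφ)
  rw [← hmp.integral_comp', integral_prod_symm _ hint]
  refine integral_mono_of_nonneg
    (ae_of_all _ fun w => Real.iSup_nonneg fun i => le_max_right _ _) hint.integral_prod_right ?_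
  filter_upwards [hint.prod_left_ae] with v hv
  refine ciSup_le fun i => max_le ?_ (hzero.trans ?_)
  · calc φ (v i) = ∫ _, φ (v i) ∂ν := by simp
      _ ≤ _ := by
        refine integral_mono (integrable_const _) hv fun x => ?_
        refine le_trans (le_of_eq ?_) (le_ciSup (f := fun k => φ
          ((MeasurableEquiv.piFinSuccAbove (fun _ => ℝ) 0).symm (x, v) k))
          (Finite.bddAbove_range _) i.succ)
        simp [MeasurableEquiv.piFinSuccAbove]
  · refine integral_mono hφ hv fun x => ?_
    refine le_trans (le_of_eq ?_) (le_ciSup (f := fun k => φ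
      ((MeasurableEquiv.piFinSuccAbove (fun _ => ℝ) 0).symm (x, v) k))
      (Finite.bddAbove_range _) 0)
    simp [MeasurableEquiv.piFinSuccAbove]

end

/-- The survival function of a nonnegative integrable variable is integrable. -/
theorem integrableOn_measureReal_Ioi {ν : Measure ℝ} [IsProbabilityMeasure ν]
    (hid : Integrable (fun x => x) ν) (hpos : ∀ᵐ x ∂ν, 0 ≤ x) :
    IntegrableOn (fun t => ν.real (Ioi t)) (Ioi 0) := by
  have hanti : Antitone fun t => ν (Ioi t) := fun a b hab => measure_mono (Ioi_subset_Ioi hab)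
  refine integrable_toReal_of_lintegral_ne_top hanti.measurable.aemeasurable ?_
  have h := lintegral_eq_lintegral_meas_lt (f := fun x => x) ν hpos (by fun_prop)
  exact h ▸ hid.lintegral_lt_top.ne

/-- Layer-cake formula for the partial expectation above a threshold. -/
theorem setIntegral_Ioi_id_eq {ν : Measure ℝ} [IsProbabilityMeasure ν]
    (hid : Integrable (fun x => x) ν) (hpos : ∀ᵐ x ∂ν, 0 ≤ x) {m : ℝ} (hm : 0 ≤ m) :
    ∫ x in Ioi m, x ∂ν = ν.real (Ioi m) * m + ∫ t in Ioi m, ν.real (Ioi t) := by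
  have hlayer := (hid.indicator (measurableSet_Ioi (a := m))).integral_eq_integral_meas_lt
    (ae_of_all _ fun x => indicator_nonneg (fun y (hy : m < y) => hm.trans hy.le) x)
  rw [integral_indicator measurableSet_Ioi] at hlayer
  have hset : ∀ t ∈ Ioi (0 : ℝ), ν.real {x | t < (Ioi m).indicator (fun x => x) x} =
      ν.real (Ioi (max t m)) := by
    intro t ht
    congr 1
    ext x
    by_cases hx : m < x
    · simp [indicator, hx]
    · simp [indicator, hx, le_of_lt (mem_Ioi.1 ht)]
  have hint := integrableOn_measureReal_Ioi hid hpos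
  have hconst : ∀ t ∈ Ioc 0 m, ν.real (Ioi (max t m)) = ν.real (Ioi m) := fun t ht => by
    rw [max_eq_right ht.2]
  have htail : ∀ t ∈ Ioi m, ν.real (Ioi (max t m)) = ν.real (Ioi t) := fun t ht => by
    rw [max_eq_left (le_of_lt ht)]
  rw [hlayer, setIntegral_congr_fun measurableSet_Ioi hset, ← Ioc_union_Ioi_eq_Ioi hm,
    setIntegral_union (Ioc_disjoint_Ioi le_rfl) measurableSet_Ioi,
    setIntegral_congr_fun measurableSet_Ioc hconst, setIntegral_congr_fun measurableSet_Ioi htail]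
  · simp [hm, mul_comm]
  · exact (integrableOn_congr_fun hconst measurableSet_Ioc).2 (by simp)
  · exact (integrableOn_congr_fun htail measurableSet_Ioi).2 (hint.mono_set (Ioi_subset_Ioi hm))

/-- Bulow–Klemperer: For a regular distribution on `[0,∞)` (continuous
CDF `F`, density `f > 0`, finite mean, nondecreasing virtual value
`φ(v) = v − (1 − F(v))/f(v)`) and `n ≥ 1`, the expected second-highest value among
`n + 1` i.i.d. draws is at least `E[max_{1 ≤ i ≤ n} φ⁺(V_i)]`, the optimal (Myerson)
expected revenue with `n` bidders. -/
theorem bulow_klemperer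
    (n : ℕ) (hn : 1 ≤ n)
    (f F : ℝ → ℝ) (hfm : Measurable f) (hFc : Continuous F)
    (hfpos : ∀ t, 0 ≤ t → 0 < f t)
    (hF : ∀ t, F t = ∫ s in (0 : ℝ)..t, f s)
    (hreg : MonotoneOn (fun v => v - (1 - F v) / f v) (Ici 0))
    (ν : Measure ℝ)
    (hν : ν = (volume.restrict (Ici (0 : ℝ))).withDensity
      fun t => ENNReal.ofReal (f t))
    (hprob : IsProbabilityMeasure ν)
    (hmean : IntegrableOn (fun t => t * f t) (Ici 0))
    (μn : Measure (Fin n → ℝ)) (hμn : μn = Measure.pi fun _ => ν)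
    (μn1 : Measure (Fin (n + 1) → ℝ)) (hμn1 : μn1 = Measure.pi fun _ => ν)
    (sh : (Fin (n + 1) → ℝ) → ℝ)
    (hsh : ∀ w, sh w = sSup {y | ∃ i j : Fin (n + 1), i ≠ j ∧ y = min (w i) (w j)}) :
    (∫ w, sh w ∂μn1) ≥
      ∫ w, (⨆ i : Fin n, max (w i - (1 - F (w i)) / f (w i)) 0) ∂μn := by
  have : NeZero n := ⟨by omega⟩
  have hac : ν ≪ volume.restrict (Ici (0 : ℝ)) := hν ▸ withDensity_absolutelyContinuous _ _
  have hpos : ∀ᵐ x ∂ν, 0 ≤ x := hac.ae_le (ae_restrict_mem measurableSet_Ici)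
  have : NullSingletonClass ν := ⟨fun x => hac (by simp)⟩
  have hfofReal : Measurable fun t => ENNReal.ofReal (f t) := hfm.ennreal_ofReal
  have hdens : ∀ g : ℝ → ℝ, Integrable g ν ↔ IntegrableOn (fun x => g x * f x) (Ici 0) := by
    intro g
    rw [hν, integrable_withDensity_iff hfofReal (ae_of_all _ fun _ => ENNReal.ofReal_lt_top)]
    exact integrableOn_congr_fun (fun x hx => by
      simp only [ENNReal.toReal_ofReal (hfpos x hx).le]) measurableSet_Ici
  have hset : ∀ (g : ℝ → ℝ) (m : ℝ), 0 ≤ m →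
      ∫ x in Ioi m, g x ∂ν = ∫ x in Ioi m, g x * f x := by
    intro g m hm
    have hsub : Ioi m ⊆ Ici 0 := fun x hx => hm.trans (le_of_lt hx)
    rw [hν, setIntegral_withDensity_eq_setIntegral_toReal_smul hfofReal
      (ae_of_all _ fun _ => ENNReal.ofReal_lt_top) _ measurableSet_Ioi,
      Measure.restrict_restrict measurableSet_Ioi, inter_eq_left.2 hsub]
    refine setIntegral_congr_fun measurableSet_Ioi fun x hx => ?_
    simp only [ENNReal.toReal_ofReal (hfpos x (hsub hx)).le, smul_eq_mul, mul_comm]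
  have hid : Integrable (fun x => x) ν := (hdens _).2 hmean
  have hfint : IntegrableOn f (Ici 0) := by
    simpa using (hdens fun _ => 1).1 (integrable_const 1)
  have hsurv_eq : ∀ t, 0 ≤ t → ν.real (Ioi t) = ∫ x in Ioi t, f x := by
    intro t ht
    simpa using hset (fun _ => 1) t ht
  have hrestrict : ν.restrict (Ici 0) = ν := Measure.restrict_eq_self_of_ae_mem hpos
  have hsurv0 : ν.real (Ioi 0) = 1 := by
    rw [measureReal_congr Ioi_ae_eq_Ici, ← measureReal_restrict_apply_univ, hrestrict]
    exact probReal_univ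
  have hsurv : ∀ t, 0 ≤ t → ν.real (Ioi t) = 1 - F t := by
    intro t ht
    have hsplit := intervalIntegral.integral_interval_add_Ioi
      (hfint.mono_set Ioi_subset_Ici_self) (hfint.mono_set fun x hx => ht.trans (le_of_lt hx))
    rw [← hF, ← hsurv_eq t ht, ← hsurv_eq 0 le_rfl, hsurv0] at hsplit
    linarith
  have htail := integrableOn_measureReal_Ioi hid hpos
  have hmul : ∀ x, 0 ≤ x → (x - (1 - F x) / f x) * f x = x * f x - ν.real (Ioi x) := by
    intro x hx
    have := (hfpos x hx).ne'
    rw [hsurv x hx]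
    field_simp
  have hφ : Integrable (fun x => x - (1 - F x) / f x) ν := by
    rw [hdens, integrableOn_congr_fun (fun x hx => hmul x (mem_Ici.1 hx)) measurableSet_Ici]
    exact hmean.sub ((integrableOn_Ici_iff_integrableOn_Ioi).2 htail)
  have hφm : Measurable fun x => x - (1 - F x) / f x := by
    have := hFc.measurable
    fun_prop
  have hmy : ∀ m, 0 ≤ m → ∫ x in Ioi m, (x - (1 - F x) / f x) ∂ν = ν.real (Ioi m) * m := by
    intro m hm
    have hsub : Ioi m ⊆ Ici 0 := fun x hx => hm.trans (le_of_lt hx)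
    rw [hset _ m hm, setIntegral_congr_fun measurableSet_Ioi fun x hx => hmul x (hsub hx),
      integral_sub (hmean.mono_set hsub) (htail.mono_set (Ioi_subset_Ioi hm)),
      ← hset (fun x => x) m hm, setIntegral_Ioi_id_eq hid hpos hm]
    ring
  have hzero : 0 ≤ ∫ x, (x - (1 - F x) / f x) ∂ν := by
    have h0 := hmy 0 le_rfl
    rw [← integral_Ici_eq_integral_Ioi, hrestrict] at h0
    simp [h0]
  subst hμn hμn1
  simp only [hsh]
  rw [integral_secondHighest_eq hφm hφ hreg hid hpos hmy]
  exact integral_iSup_posPart_le hφm hφ hzero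
end
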